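/- Let 1 ≤ p, q, r ≤ ∞ satisfy 1/p ≥ |1/r − 1/2| + 1/q' and q ≤ min{r, r'}. Then there exists a constant C > 0 such that for every Schwartz function a on ℝ^{2d} and every Schwartz function f on ℝ^d one has ‖a(x,D)f‖_{L^r(ℝ^d)} ≤ C · ‖a‖_{M^{p,q}} · ‖f‖_{L^r(ℝ^d)}. -/

import Mathlib

open MeasureTheory SchwartzMap Complex ENNReal NNReal

noncomputable section

/-- Mixed `L^p`-type norm of an `ℝ≥0∞`-valued function, with the usual
`essSup` modification when `p = ∞`. -/
def lqNorm {α : Type*} [MeasurableSpace α] (μ : Measure α) (p : ℝ≥0∞)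
    (f : α → ℝ≥0∞) : ℝ≥0∞ :=
  if p = ∞ then essSup f μ else (∫⁻ a, f a ^ p.toReal ∂μ) ^ (1 / p.toReal)

/-- Conjugate exponent in `ℝ≥0∞` : `1/p + 1/p' = 1`, with `1' = ∞`, `∞' = 1`. -/
def dualExp (p : ℝ≥0∞) : ℝ≥0∞ :=
  if p = 1 then ∞ else if p = ∞ then 1 else ENNReal.ofReal (p.toReal / (p.toReal - 1))

/-- `1/p` as a real number, with the convention `1/∞ = 0`. -/
def invR (p : ℝ≥0∞) : ℝ := (p⁻¹).toReal

/-- The Gaussian window `G(t) = exp(-π |t|²)` (as a complex-valued function). -/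
def gaussWin {ι : Type*} [Fintype ι] (t : EuclideanSpace ℝ ι) : ℂ :=
  Complex.exp (-(Real.pi * ‖t‖ ^ 2))

/-- Short-time Fourier transform with Gaussian window:
`V_G F (x, ω) = ∫ F t * conj (G (t - x)) * exp (-2πi ω⬝t) dt`. -/
def STFT {ι : Type*} [Fintype ι] (F : EuclideanSpace ℝ ι → ℂ)
    (x ω : EuclideanSpace ℝ ι) : ℂ :=
  ∫ t, F t * (starRingEnd ℂ) (gaussWin (t - x)) *
    Complex.exp (Complex.I * (-(2 * Real.pi * (inner ℝ ω t : ℝ))))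

/-- Modulation space norm `M^{p,q}`. -/
def modNorm {ι : Type*} [Fintype ι] (p q : ℝ≥0∞)
    (F : EuclideanSpace ℝ ι → ℂ) : ℝ≥0∞ :=
  lqNorm volume q fun ω => lqNorm volume p fun x => (‖STFT F x ω‖₊ : ℝ≥0∞)

/-- Wiener amalgam norm `W(𝓕 L^p, L^q)` (local component Fourier–Lebesgue). -/
def wFLNorm {ι : Type*} [Fintype ι] (p q : ℝ≥0∞)
    (F : EuclideanSpace ℝ ι → ℂ) : ℝ≥0∞ :=
  lqNorm volume q fun x => lqNorm volume p fun ω => (‖STFT F x ω‖₊ : ℝ≥0∞)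

/-- The unit cube `[0,1)^d`. -/
def unitCube (d : ℕ) : Set (EuclideanSpace ℝ (Fin d)) :=
  {x | ∀ i, x i ∈ Set.Ico (0 : ℝ) 1}

/-- Wiener amalgam norm
`‖f‖_{W(L^r,L^s)} = ( Σ_{n ∈ ℤ^d} ( ∫_{[0,1)^d} |f(x+n)|^r dx )^{s/r} )^{1/s}`. -/
def wNorm (d : ℕ) (r s : ℝ≥0∞) (f : EuclideanSpace ℝ (Fin d) → ℂ) : ℝ≥0∞ :=
  lqNorm (Measure.count : Measure (Fin d → ℤ)) s fun n =>
    lqNorm (volume.restrict (unitCube d)) r fun x =>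
      (‖f (x + show EuclideanSpace ℝ (Fin d) from WithLp.toLp 2 fun i => (n i : ℝ))‖₊ : ℝ≥0∞)

/-- Pairing `(x, ω) ∈ ℝ^d × ℝ^d ↦ ℝ^{2d}`. -/
def pairE {d : ℕ} (x ω : EuclideanSpace ℝ (Fin d)) :
    EuclideanSpace ℝ (Fin d ⊕ Fin d) :=
  WithLp.toLp 2 fun i => Sum.elim (fun j => x j) (fun j => ω j) i

/-- First (space) component of a point of `ℝ^{2d}`. -/
def xpart {d : ℕ} (z : EuclideanSpace ℝ (Fin d ⊕ Fin d)) :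
    EuclideanSpace ℝ (Fin d) := WithLp.toLp 2 fun i => z (Sum.inl i)

/-- Second (frequency) component of a point of `ℝ^{2d}`. -/
def wpart {d : ℕ} (z : EuclideanSpace ℝ (Fin d ⊕ Fin d)) :
    EuclideanSpace ℝ (Fin d) := WithLp.toLp 2 fun i => z (Sum.inr i)

/-- Fourier transform `f̂(ω) = ∫ f t e^{-2πi t⬝ω} dt`. -/
def fTrans {ι : Type*} [Fintype ι] (f : EuclideanSpace ℝ ι → ℂ)
    (ω : EuclideanSpace ℝ ι) : ℂ :=
  ∫ t, f t * Complex.exp (Complex.I * (-(2 * Real.pi * (inner ℝ t ω : ℝ))))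

/-- Kohn–Nirenberg operator `a(x,D) f (x) = ∫ a(x,ω) f̂(ω) e^{2πi x⬝ω} dω`. -/
def KNop {d : ℕ} (a : EuclideanSpace ℝ (Fin d ⊕ Fin d) → ℂ)
    (f : EuclideanSpace ℝ (Fin d) → ℂ) (x : EuclideanSpace ℝ (Fin d)) : ℂ :=
  ∫ ω, a (pairE x ω) * fTrans f ω *
    Complex.exp (Complex.I * (2 * Real.pi * (inner ℝ x ω : ℝ)))

/-- Weyl operator `L_σ f (x) = ∫∫ e^{2πi (x-y)⬝ω} σ((x+y)/2, ω) f(y) dy dω`. -/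
def weylOp {d : ℕ} (σ : EuclideanSpace ℝ (Fin d ⊕ Fin d) → ℂ)
    (f : EuclideanSpace ℝ (Fin d) → ℂ) (x : EuclideanSpace ℝ (Fin d)) : ℂ :=
  ∫ y, ∫ ω, Complex.exp (Complex.I * (2 * Real.pi * (inner ℝ (x - y) ω : ℝ))) *
    σ (pairE ((2 : ℝ)⁻¹ • (x + y)) ω) * f y

/-- Cross-Wigner distribution
`W(g,f)(x,ω) = ∫ g(x+t/2) conj(f(x−t/2)) e^{−2πi ω⬝t} dt`. -/
def wigner {d : ℕ} (g f : EuclideanSpace ℝ (Fin d) → ℂ)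
    (z : EuclideanSpace ℝ (Fin d ⊕ Fin d)) : ℂ :=
  ∫ t, g (xpart z + (2 : ℝ)⁻¹ • t) * (starRingEnd ℂ) (f (xpart z - (2 : ℝ)⁻¹ • t)) *
    Complex.exp (Complex.I * (-(2 * Real.pi * (inner ℝ (wpart z) t : ℝ))))

end

open FourierTransform in
theorem fourier_flip {V : Type*} [NormedAddCommGroup V] [InnerProductSpace ℝ V]
    [FiniteDimensional ℝ V] [MeasurableSpace V] [BorelSpace V] {f g : V → ℂ}
    (hf : Integrable f) (hg : Integrable g) :
    ∫ x, 𝓕 f x * g x = ∫ x, f x * 𝓕 g x := by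
  have := VectorFourier.integral_fourierIntegral_smul_eq_flip (L := innerₗ V)
    (e := Real.fourierChar) (μ := volume) (ν := volume)
    Real.continuous_fourierChar continuous_inner hf hg
  rw [flip_innerₗ] at this
  simpa only [smul_eq_mul] using! this

open FourierTransform in
theorem continuous_fourier' {V : Type*} [NormedAddCommGroup V] [InnerProductSpace ℝ V]
    [FiniteDimensional ℝ V] [MeasurableSpace V] [BorelSpace V] {f : V → ℂ}
    (hf : Integrable f) : Continuous (𝓕 f) :=
  VectorFourier.fourierIntegral_continuous Real.continuous_fourierChar continuous_inner hf

open FourierTransform in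
theorem enorm_fourier_le {V : Type*} [NormedAddCommGroup V] [InnerProductSpace ℝ V]
    [FiniteDimensional ℝ V] [MeasurableSpace V] [BorelSpace V] (f : V → ℂ) (w : V) :
    ‖𝓕 f w‖ₑ ≤ ∫⁻ x, ‖f x‖ₑ := by
  rw [Real.fourier_eq]
  refine (enorm_integral_le_lintegral_enorm _).trans (le_of_eq ?_)
  refine lintegral_congr fun x => ?_
  rw [← ofReal_norm, ← ofReal_norm]
  simp [Circle.norm_smul]

open FourierTransform in
theorem fourier_toLp_ae {V : Type*} [NormedAddCommGroup V] [InnerProductSpace ℝ V]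
    [FiniteDimensional ℝ V] [MeasurableSpace V] [BorelSpace V] {h : V → ℂ}
    (h1 : Integrable h) (h2 : MemLp h 2) :
    ∀ᵐ x ∂(volume : Measure V), (𝓕 (h2.toLp h) : Lp ℂ 2 (volume : Measure V)) x = 𝓕 h x := by
  obtain ⟨u, hu⟩ : ∃ u : Lp ℂ 2 (volume : Measure V), u = 𝓕 (h2.toLp h) := ⟨_, rfl⟩
  have hae : ∀ᵐ x ∂(volume : Measure V), u x = 𝓕 h x := by
    apply ae_eq_of_integral_contDiff_smul_eq (μ := volume)
    · exact (Lp.memLp u).locallyIntegrable (by norm_num)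
    · exact (continuous_fourier' h1).locallyIntegrable
    intro g hg hgs
    have hgc : ContDiff ℝ ((⊤ : ℕ∞) : WithTop ℕ∞) (fun x => (g x : ℂ)) := Complex.ofRealCLM.contDiff.comp hg
    have hgcs : HasCompactSupport (fun x => (g x : ℂ)) :=
      hgs.comp_left (g := fun y : ℝ => (y : ℂ)) (by simp)
    set φ : 𝓢(V, ℂ) := hgcs.toSchwartzMap hgc with hφ
    have hφ' : ∀ x, φ x = (g x : ℂ) := fun x => rfl
    have e1 := congrArg (fun T => T φ) (Lp.fourier_toTemperedDistribution_eq (h2.toLp h))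
    rw [← hu] at e1
    simp only [TemperedDistribution.fourier_apply, Lp.toTemperedDistribution_apply] at e1
    have e2 : ∫ x, (𝓕 φ) x • (h2.toLp h) x = ∫ x, (𝓕 (φ : V → ℂ)) x * h x := by
      apply integral_congr_ae
      filter_upwards [h2.coeFn_toLp] with x hx
      rw [hx, smul_eq_mul, SchwartzMap.fourier_coe]
    rw [e2, fourier_flip φ.integrable h1] at e1
    simp only [hφ', smul_eq_mul] at e1
    simp only [Complex.real_smul]
    rw [e1]
  rw [← hu]; exact hae

open FourierTransform in
theorem plancherel_L1L2 {V : Type*} [NormedAddCommGroup V] [InnerProductSpace ℝ V]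
    [FiniteDimensional ℝ V] [MeasurableSpace V] [BorelSpace V] {h : V → ℂ}
    (h1 : Integrable h) (h2 : MemLp h 2) :
    eLpNorm (𝓕 h) 2 volume = eLpNorm h 2 volume := by
  obtain ⟨u, hu⟩ : ∃ u : Lp ℂ 2 (volume : Measure V), u = 𝓕 (h2.toLp h) := ⟨_, rfl⟩
  have hae : ∀ᵐ x ∂(volume : Measure V), u x = 𝓕 h x := by
    rw [hu]; exact fourier_toLp_ae h1 h2
  have e3 : ‖u‖ = ‖h2.toLp h‖ := by rw [hu]; exact Lp.norm_fourier_eq _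
  rw [← eLpNorm_congr_ae hae]
  have e4 : ‖u‖ₑ = ‖h2.toLp h‖ₑ := by rw [← ofReal_norm, ← ofReal_norm, e3]
  rw [Lp.enorm_def, Lp.enorm_def] at e4
  rw [e4, eLpNorm_congr_ae h2.coeFn_toLp]

open FourierTransform in
theorem plancherel_lintegral {V : Type*} [NormedAddCommGroup V] [InnerProductSpace ℝ V]
    [FiniteDimensional ℝ V] [MeasurableSpace V] [BorelSpace V] {h : V → ℂ}
    (h1 : Integrable h) (h2 : MemLp h 2) :
    ∫⁻ w, ‖𝓕 h w‖ₑ ^ (2:ℝ) = ∫⁻ x, ‖h x‖ₑ ^ (2:ℝ) := by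
  have := plancherel_L1L2 h1 h2
  rw [eLpNorm_eq_lintegral_rpow_enorm_toReal (by norm_num) (by norm_num),
    eLpNorm_eq_lintegral_rpow_enorm_toReal (by norm_num) (by norm_num)] at this
  simp only [ENNReal.toReal_ofNat] at this
  have h3 := congrArg (fun x : ℝ≥0∞ => x ^ (2:ℝ)) this
  simp only [← ENNReal.rpow_mul] at h3
  norm_num at h3
  simpa using h3

open FourierTransform in
theorem parseval_conj {V : Type*} [NormedAddCommGroup V] [InnerProductSpace ℝ V]
    [FiniteDimensional ℝ V] [MeasurableSpace V] [BorelSpace V] {h k : V → ℂ}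
    (h1 : Integrable h) (h2 : MemLp h 2) (k1 : Integrable k) (k2 : MemLp k 2) :
    ∫ w, 𝓕 k w * (starRingEnd ℂ) (𝓕 h w) = ∫ x, k x * (starRingEnd ℂ) (h x) := by
  have := Lp.inner_fourier_eq (h2.toLp h) (k2.toLp k)
  rw [L2.inner_def, L2.inner_def] at this
  simp only [RCLike.inner_apply] at this
  have e1 : ∫ w, 𝓕 k w * (starRingEnd ℂ) (𝓕 h w) = ∫ a, (𝓕 (k2.toLp k) : Lp ℂ 2 (volume : Measure V)) a
      * (starRingEnd ℂ) ((𝓕 (h2.toLp h) : Lp ℂ 2 (volume : Measure V)) a) := by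
    apply integral_congr_ae
    filter_upwards [fourier_toLp_ae h1 h2, fourier_toLp_ae k1 k2] with x hx hy
    rw [hx, hy]
  rw [e1, this]
  apply integral_congr_ae
  filter_upwards [h2.coeFn_toLp, k2.coeFn_toLp] with x hx hy
  rw [hx, hy]

open FourierTransform in
theorem fourier_conj' {V : Type*} [NormedAddCommGroup V] [InnerProductSpace ℝ V]
    [FiniteDimensional ℝ V] [MeasurableSpace V] [BorelSpace V] (h : V → ℂ) (w : V) :
    𝓕 (fun x => (starRingEnd ℂ) (h x)) w = (starRingEnd ℂ) (𝓕 h (-w)) := by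
  rw [Real.fourier_eq, Real.fourier_eq, ← integral_conj]
  congr 1; ext x
  rw [Circle.smul_def, Circle.smul_def, smul_eq_mul, smul_eq_mul, map_mul,
    ← Circle.coe_inv_eq_conj, ← AddChar.map_neg_eq_inv]
  simp

open FourierTransform in
theorem parseval' {V : Type*} [NormedAddCommGroup V] [InnerProductSpace ℝ V]
    [FiniteDimensional ℝ V] [MeasurableSpace V] [BorelSpace V] {h k : V → ℂ}
    (h1 : Integrable h) (h2 : MemLp h 2) (k1 : Integrable k) (k2 : MemLp k 2) :
    ∫ x, k x * h x = ∫ w, 𝓕 k w * 𝓕 h (-w) := by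
  have := parseval_conj (h := fun x => (starRingEnd ℂ) (h x)) (k := k) 
    (Complex.conjLIE.toContinuousLinearEquiv.toContinuousLinearMap.integrable_comp h1) h2.star k1 k2
  simp only [Complex.conj_conj, fourier_conj'] at this
  exact this.symm

theorem lint_rpow_Ioc (M k : ℝ) (hM : 0 ≤ M) (hk : 0 < k) :
    ∫⁻ t in Set.Ioc 0 M, ENNReal.ofReal (t ^ (k - 1)) = ENNReal.ofReal (M ^ k / k) := by
  have hi : IntegrableOn (fun t : ℝ => t ^ (k - 1)) (Set.Ioc 0 M) := by
    have := (intervalIntegral.intervalIntegrable_rpow' (a := 0) (b := M)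
      (r := k - 1) (by linarith))
    exact (intervalIntegrable_iff_integrableOn_Ioc_of_le hM).1 this
  rw [← ofReal_integral_eq_lintegral_ofReal hi]
  · rw [← intervalIntegral.integral_of_le hM, integral_rpow (Or.inl (by linarith))]
    simp [Real.zero_rpow hk.ne']
  · refine (ae_restrict_iff' measurableSet_Ioc).2 (Filter.Eventually.of_forall fun t ht => ?_)
    exact Real.rpow_nonneg ht.1.le _

theorem HY_inner (ρ s y : ℝ) (h1 : 1 < ρ) (h2 : ρ < 2) (hs : s = ρ / (ρ - 1)) (hy : 0 ≤ y) :
    ∫⁻ t in Set.Ioi (0:ℝ), (if t * y ^ (ρ - 1) ≤ 2 then ENNReal.ofReal (y ^ (2:ℝ)) else 0) *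
      ENNReal.ofReal (4 * t ^ (s - 3)) ≤ ENNReal.ofReal (4 * (2 ^ (s - 2) / (s - 2))) *
        ENNReal.ofReal (y ^ ρ) := by
  have hρ : 0 < ρ - 1 := by linarith
  have hs2 : 0 < s - 2 := by
    rw [hs, sub_pos, lt_div_iff₀ hρ]; linarith
  rcases hy.eq_or_lt with rfl | hy
  · simp
  set M : ℝ := 2 * y ^ (1 - ρ) with hM
  have hMp : 0 < M := by positivity
  have hiff : ∀ t : ℝ, t * y ^ (ρ - 1) ≤ 2 ↔ t ≤ M := by
    intro t
    rw [hM, ← neg_sub ρ 1, Real.rpow_neg hy.le, ← div_eq_mul_inv, le_div_iff₀ (by positivity)]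
  calc _ = ∫⁻ t in Set.Ioi (0:ℝ), (Set.Ioc 0 M).indicator (fun t =>
        ENNReal.ofReal (4 * y ^ (2:ℝ)) * ENNReal.ofReal (t ^ ((s - 2) - 1))) t := by
        refine setLIntegral_congr_fun measurableSet_Ioi fun t ht => ?_
        have ht : 0 < t := ht
        by_cases h : t ≤ M
        · simp only [hiff, h, if_true]
          rw [Set.indicator_of_mem (show t ∈ Set.Ioc 0 M from ⟨ht, h⟩),
            ← ENNReal.ofReal_mul (by positivity), ← ENNReal.ofReal_mul (by positivity)]
          congr 1
          rw [show s - 2 - 1 = s - 3 by ring]; ring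
        · simp only [hiff, h, if_false]
          rw [Set.indicator_of_notMem (fun h' => h h'.2)]; simp
    _ ≤ ∫⁻ t, (Set.Ioc 0 M).indicator (fun t =>
        ENNReal.ofReal (4 * y ^ (2:ℝ)) * ENNReal.ofReal (t ^ ((s - 2) - 1))) t :=
        setLIntegral_le_lintegral _ _
    _ = ENNReal.ofReal (4 * y ^ (2:ℝ)) * ENNReal.ofReal (M ^ (s - 2) / (s - 2)) := by
        rw [lintegral_indicator measurableSet_Ioc, lintegral_const_mul' _ _ ENNReal.ofReal_ne_top,
          lint_rpow_Ioc _ _ hMp.le hs2]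
    _ = _ := by
        rw [← ENNReal.ofReal_mul (by positivity), ← ENNReal.ofReal_mul (by positivity)]
        congr 1
        rw [hM, Real.mul_rpow (by norm_num) (by positivity), ← Real.rpow_mul hy.le]
        have e : y ^ (2:ℝ) * y ^ ((1 - ρ) * (s - 2)) = y ^ ρ := by
          rw [← Real.rpow_add hy]
          congr 1
          rw [hs]; field_simp; ring
        rw [← e]; ring

open FourierTransform in
theorem HY_norm {V : Type*} [NormedAddCommGroup V] [InnerProductSpace ℝ V]
    [FiniteDimensional ℝ V] [MeasurableSpace V] [BorelSpace V]
    (ρ s : ℝ) (hr1 : 1 < ρ) (hr2 : ρ < 2) (hs : s = ρ / (ρ - 1)) {h : V → ℂ}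
    (hm : Measurable h) (h1 : Integrable h) (h2 : MemLp h 2) (hn : ∫⁻ x, ‖h x‖ₑ ^ ρ ≤ 1) :
    ∫⁻ w, ‖𝓕 h w‖ₑ ^ s ≤ ENNReal.ofReal (s * (4 * (2 ^ (s - 2) / (s - 2)))) := by
  have hρ : 0 < ρ - 1 := by linarith
  have hs2 : 0 < s - 2 := by
    rw [hs, sub_pos, lt_div_iff₀ hρ]; linarith
  have hFc := continuous_fourier' h1
  have key : ∀ t : ℝ, 0 < t → volume {w | t < ‖𝓕 h w‖} ≤ ∫⁻ x,
      (if t * ‖h x‖ ^ (ρ - 1) ≤ 2 then ENNReal.ofReal (‖h x‖ ^ (2:ℝ)) else 0) *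
        ENNReal.ofReal (4 / t ^ 2) := by
    intro t ht
    set S : Set V := {x | t * ‖h x‖ ^ (ρ - 1) ≤ 2} with hS
    have hSm : MeasurableSet S := by
      apply measurableSet_le _ measurable_const
      exact ((hm.norm.pow_const _).const_mul t)
    set a : V → ℂ := S.indicator h with ha
    set b : V → ℂ := Sᶜ.indicator h with hb
    have ia : Integrable a := h1.indicator hSm
    have ib : Integrable b := h1.indicator hSm.compl
    have ha2 : MemLp a 2 := h2.indicator hSm
    have hab : h = a + b := (Set.indicator_self_add_compl S h).symm
    have hF : ∀ w, 𝓕 h w = 𝓕 a w + 𝓕 b w := by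
      intro w
      rw [hab]
      simp only [Real.fourier_eq]
      rw [← integral_add]
      · simp [smul_add]
      · exact (Real.fourierIntegral_convergent_iff w).2 ia
      · exact (Real.fourierIntegral_convergent_iff w).2 ib
    have hbn : ∀ w, ‖𝓕 b w‖ₑ ≤ ENNReal.ofReal (t / 2) := by
      intro w
      refine (enorm_fourier_le b w).trans ?_
      calc ∫⁻ x, ‖b x‖ₑ ≤ ∫⁻ x, ENNReal.ofReal (t / 2) * ‖h x‖ₑ ^ ρ := by
            apply lintegral_mono
            intro x
            by_cases hx : x ∈ S
            · simp [hb, hx]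
            · have hx' : 2 < t * ‖h x‖ ^ (ρ - 1) := by simpa [hS] using hx
              have e : b x = h x := Set.indicator_of_mem (show x ∈ Sᶜ from hx) h
              have hpos : 0 < ‖h x‖ := by
                rcases (norm_nonneg (h x)).eq_or_lt with h0 | h0
                · rw [← h0, Real.zero_rpow hρ.ne'] at hx'; linarith
                · exact h0
              simp only [e]
              rw [← ofReal_norm, ENNReal.ofReal_rpow_of_nonneg (norm_nonneg _) (by linarith),
                ← ENNReal.ofReal_mul (by positivity)]
              apply ENNReal.ofReal_le_ofReal
              have : ‖h x‖ ^ ρ = ‖h x‖ ^ (ρ - 1) * ‖h x‖ := by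
                rw [← Real.rpow_add_one hpos.ne']; congr 1; ring
              rw [this]
              nlinarith
        _ = ENNReal.ofReal (t / 2) * ∫⁻ x, ‖h x‖ₑ ^ ρ :=
            lintegral_const_mul' _ _ (by simp)
        _ ≤ ENNReal.ofReal (t / 2) * 1 := by gcongr
        _ = _ := mul_one _
    have hsub : {w | t < ‖𝓕 h w‖} ⊆ {w | ENNReal.ofReal ((t / 2) ^ (2:ℝ)) ≤ ‖𝓕 a w‖ₑ ^ (2:ℝ)} := by
      intro w hw
      have hw : t < ‖𝓕 h w‖ := hw
      have hb' : ‖𝓕 b w‖ ≤ t / 2 := by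
        have := hbn w
        rwa [← ofReal_norm, ENNReal.ofReal_le_ofReal_iff (by positivity)] at this
      have : t / 2 ≤ ‖𝓕 a w‖ := by
        have := norm_add_le (𝓕 a w) (𝓕 b w)
        rw [← hF] at this; linarith
      show ENNReal.ofReal ((t / 2) ^ (2:ℝ)) ≤ ‖𝓕 a w‖ₑ ^ (2:ℝ)
      rw [← ofReal_norm, ENNReal.ofReal_rpow_of_nonneg (norm_nonneg _) (by norm_num)]
      exact ENNReal.ofReal_le_ofReal (by gcongr)
    refine (measure_mono hsub).trans ?_
    have cheb := meas_ge_le_lintegral_div (μ := (volume : Measure V))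
      (f := fun w => ‖𝓕 a w‖ₑ ^ (2:ℝ)) (ε := ENNReal.ofReal ((t / 2) ^ (2:ℝ)))
      ((continuous_fourier' ia).measurable.enorm.pow_const _).aemeasurable
      (by simp; positivity) (by simp)
    refine cheb.trans ?_
    rw [plancherel_lintegral ia ha2, lintegral_mul_const' _ _ (by simp), div_eq_mul_inv,
      ← ENNReal.ofReal_inv_of_pos (by positivity)]
    refine mul_le_mul' (le_of_eq ?_) (le_of_eq ?_)
    · apply lintegral_congr
      intro x
      by_cases hx : x ∈ S
      · rw [if_pos (show t * ‖h x‖ ^ (ρ - 1) ≤ 2 from hx), ha, Set.indicator_of_mem hx, ← ofReal_norm,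
          ENNReal.ofReal_rpow_of_nonneg (norm_nonneg _) (by norm_num)]
      · rw [if_neg (show ¬ t * ‖h x‖ ^ (ρ - 1) ≤ 2 from hx), ha, Set.indicator_of_notMem hx]; simp
    · congr 1
      rw [Real.rpow_two]; field_simp; norm_num
  calc ∫⁻ w, ‖𝓕 h w‖ₑ ^ s = ∫⁻ w, ENNReal.ofReal (‖𝓕 h w‖ ^ s) := by
        apply lintegral_congr; intro w
        rw [← ofReal_norm, ENNReal.ofReal_rpow_of_nonneg (norm_nonneg _) (by linarith)]
    _ = ENNReal.ofReal s * ∫⁻ t in Set.Ioi 0, volume {w : V | t < ‖𝓕 h w‖} *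
          ENNReal.ofReal (t ^ (s - 1)) :=
        lintegral_rpow_eq_lintegral_meas_lt_mul _ (Filter.Eventually.of_forall fun _ => norm_nonneg _)
          hFc.norm.aemeasurable (by linarith)
    _ ≤ ENNReal.ofReal s * ∫⁻ t in Set.Ioi (0:ℝ), ∫⁻ x,
      (if t * ‖h x‖ ^ (ρ - 1) ≤ 2 then ENNReal.ofReal (‖h x‖ ^ (2:ℝ)) else 0) *
        ENNReal.ofReal (4 * t ^ (s - 3)) := by
        refine mul_le_mul_right ?_ _
        refine setLIntegral_mono' measurableSet_Ioi fun t ht => ?_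
        have ht : 0 < t := ht
        refine (mul_le_mul_left (key t ht) _).trans ?_
        rw [← lintegral_mul_const' _ _ (by simp)]
        refine lintegral_mono fun x => ?_
        rw [mul_assoc, ← ENNReal.ofReal_mul (by positivity)]
        refine mul_le_mul_right (ENNReal.ofReal_le_ofReal ?_) _
        rw [show s - 1 = (s - 3) + 2 by ring, Real.rpow_add ht, Real.rpow_two]
        apply le_of_eq; field_simp
    _ = ENNReal.ofReal s * ∫⁻ x, ∫⁻ t in Set.Ioi (0:ℝ),
      (if t * ‖h x‖ ^ (ρ - 1) ≤ 2 then ENNReal.ofReal (‖h x‖ ^ (2:ℝ)) else 0) *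
        ENNReal.ofReal (4 * t ^ (s - 3)) := by
        congr 1
        apply lintegral_lintegral_swap
        apply Measurable.aemeasurable
        apply Measurable.mul
        · refine Measurable.ite ?_ ?_ measurable_const
          · apply measurableSet_le _ measurable_const
            exact measurable_fst.mul ((hm.comp measurable_snd).norm.pow_const _)
          · exact ((hm.comp measurable_snd).norm.pow_const _).ennreal_ofReal
        · exact ((measurable_fst.pow_const _).const_mul _).ennreal_ofReal
    _ ≤ ENNReal.ofReal s * ∫⁻ x, ENNReal.ofReal (4 * (2 ^ (s - 2) / (s - 2))) * ‖h x‖ₑ ^ ρ := by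
        gcongr with x
        refine (HY_inner ρ s _ hr1 hr2 hs (norm_nonneg _)).trans (le_of_eq ?_)
        rw [← ofReal_norm, ENNReal.ofReal_rpow_of_nonneg (norm_nonneg _) (by linarith)]
    _ ≤ ENNReal.ofReal s * (ENNReal.ofReal (4 * (2 ^ (s - 2) / (s - 2))) * 1) := by
        rw [lintegral_const_mul' _ _ ENNReal.ofReal_ne_top]
        gcongr
    _ = _ := by rw [mul_one, ← ENNReal.ofReal_mul (by linarith)]

open FourierTransform in
theorem HY {V : Type*} [NormedAddCommGroup V] [InnerProductSpace ℝ V]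
    [FiniteDimensional ℝ V] [MeasurableSpace V] [BorelSpace V]
    (ρ s : ℝ) (hr1 : 1 < ρ) (hr2 : ρ < 2) (hs : s = ρ / (ρ - 1)) {h : V → ℂ}
    (hm : Measurable h) (h1 : Integrable h) (h2 : MemLp h 2)  :
    ∫⁻ w, ‖𝓕 h w‖ₑ ^ s ≤ ENNReal.ofReal (s * (4 * (2 ^ (s - 2) / (s - 2)))) *
      (∫⁻ x, ‖h x‖ₑ ^ ρ) ^ (s / ρ) := by
  have hρ : 0 < ρ - 1 := by linarith
  have hs2 : 0 < s - 2 := by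
    rw [hs, sub_pos, lt_div_iff₀ hρ]; linarith
  set N := ∫⁻ x, ‖h x‖ₑ ^ ρ with hN
  have hNtop : N ≠ ∞ := by
    have : N ≤ ∫⁻ x, (‖h x‖ₑ + ‖h x‖ₑ ^ (2:ℝ)) := by
      refine lintegral_mono fun x => ?_
      rcases le_total ‖h x‖ₑ 1 with hx | hx
      · refine le_trans ?_ le_self_add
        simpa using ENNReal.rpow_le_rpow_of_exponent_ge hx hr1.le
      · refine le_trans ?_ le_add_self
        exact ENNReal.rpow_le_rpow_of_exponent_le hx hr2.le
    refine ne_top_of_le_ne_top ?_ this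
    rw [lintegral_add_left hm.enorm]
    refine ENNReal.add_ne_top.2 ⟨h1.2.ne, ?_⟩
    have := lintegral_rpow_enorm_lt_top_of_eLpNorm_lt_top (by norm_num) (by norm_num) h2.2
    simpa using this.ne
  by_cases hN0 : N = 0
  · have h0 : h =ᵐ[volume] 0 := by
      rw [hN, lintegral_eq_zero_iff (hm.enorm.pow_const _)] at hN0
      filter_upwards [hN0] with x hx
      simp only [Pi.zero_apply, ENNReal.rpow_eq_zero_iff] at hx
      rcases hx with hx | hx
      · simpa using hx.1
      · linarith [hx.2]
    have : ∀ w, 𝓕 h w = 0 := by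
      intro w
      rw [Real.fourier_congr_ae h0]
      simp [Real.fourier_eq]
    simp [this, ENNReal.zero_rpow_of_pos (show 0 < s by linarith)]
  set K : ℝ := (N ^ (1/ρ)).toReal with hK
  have hKt : N ^ (1/ρ) ≠ ∞ := ENNReal.rpow_ne_top_of_nonneg (by positivity) hNtop
  have hKpos : 0 < K := ENNReal.toReal_pos (by
    simp [ENNReal.rpow_eq_zero_iff, hN0, hNtop]) hKt
  have hKe : ENNReal.ofReal K = N ^ (1/ρ) := ENNReal.ofReal_toReal hKt
  set h' : V → ℂ := fun x => (K⁻¹ : ℂ) * h x with hh'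
  have en : ∀ z : ℂ, ‖(K⁻¹ : ℂ) * z‖ₑ = (N ^ (1/ρ))⁻¹ * ‖z‖ₑ := by
    intro z
    rw [enorm_mul, ← hKe, ← ENNReal.ofReal_inv_of_pos hKpos, ← ofReal_norm]
    congr 2
    simp [abs_of_pos hKpos]
  have main := HY_norm ρ s hr1 hr2 hs (h := h') (hm.const_mul _) (h1.const_mul _)
    (h2.const_mul _) (by
      simp only [hh', en]
      have : ∀ x, ((N ^ (1/ρ))⁻¹ * ‖h x‖ₑ) ^ ρ = N⁻¹ * ‖h x‖ₑ ^ ρ := by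
        intro x
        rw [ENNReal.mul_rpow_of_nonneg _ _ (by linarith), ENNReal.inv_rpow, ← ENNReal.rpow_mul,
          one_div_mul_cancel (by linarith), ENNReal.rpow_one]
      simp only [this]
      rw [lintegral_const_mul' _ _ (by simp [hN0]), ← hN, ENNReal.inv_mul_cancel hN0 hNtop])
  have hF : ∀ w, 𝓕 h' w = (K⁻¹ : ℂ) * 𝓕 h w := by
    intro w
    simp only [Real.fourier_eq, hh']
    rw [← integral_const_mul]
    congr 1; ext v
    simp only [Circle.smul_def, smul_eq_mul]; ring
  simp only [hF, en] at main
  have e2 : ∀ w, ((N ^ (1/ρ))⁻¹ * ‖𝓕 h w‖ₑ) ^ s = (N ^ (s/ρ))⁻¹ * ‖𝓕 h w‖ₑ ^ s := by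
    intro x
    rw [ENNReal.mul_rpow_of_nonneg _ _ (by linarith), ENNReal.inv_rpow, ← ENNReal.rpow_mul,
      one_div_mul_eq_div]
  simp only [e2] at main
  have hn0 : N ^ (s/ρ) ≠ 0 := by simp [ENNReal.rpow_eq_zero_iff, hN0, hNtop]
  have hnt : N ^ (s/ρ) ≠ ∞ := ENNReal.rpow_ne_top_of_nonneg (by apply div_nonneg <;> linarith) hNtop
  rw [lintegral_const_mul' _ _ (by simp [hn0]), mul_comm, ← div_eq_mul_inv] at main
  exact (ENNReal.div_le_iff hn0 hnt).1 main

section Win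
set_option linter.unusedSectionVars false
variable {V : Type*} [NormedAddCommGroup V] [InnerProductSpace ℝ V]
    [FiniteDimensional ℝ V] [MeasurableSpace V] [BorelSpace V]

/-- Gaussian with parameter. -/
noncomputable def gw {V : Type*} [NormedAddCommGroup V] (c : ℝ) (t : V) : ℝ :=
  Real.exp (-(Real.pi * c * ‖t‖ ^ 2))

/-- Gaussian with parameter, extended nonnegative valued. -/
noncomputable def gE {V : Type*} [NormedAddCommGroup V] (c : ℝ) (t : V) : ℝ≥0∞ :=
  ENNReal.ofReal (gw c t)

open FourierTransform in
/-- STFT with window `gw c`. -/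
noncomputable def Vw (c : ℝ) (f : V → ℂ) (x ω : V) : ℂ :=
  𝓕 (fun t => f t * (gw c (t - x) : ℂ)) ω

/-- bounded, measurable, integrable. -/
def Good (f : V → ℂ) : Prop := Measurable f ∧ Integrable f ∧ ∃ M : ℝ, ∀ x, ‖f x‖ ≤ M

theorem gw_pos (c : ℝ) (t : V) : 0 < gw c t := Real.exp_pos _

theorem gw_le_one {c : ℝ} (hc : 0 ≤ c) (t : V) : gw c t ≤ 1 := by
  unfold gw; rw [Real.exp_le_one_iff]
  have := Real.pi_pos
  have : 0 ≤ Real.pi * c * ‖t‖ ^ 2 := by positivity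
  linarith

theorem gw_continuous (c : ℝ) : Continuous (gw c : V → ℝ) := by
  unfold gw; fun_prop

theorem gw_neg (c : ℝ) (t : V) : gw c (-t) = gw c t := by simp [gw]

theorem gw_integrable {c : ℝ} (hc : 0 < c) : Integrable (gw c : V → ℝ) := by
  have := (GaussianFourier.integrable_cexp_neg_mul_sq_norm_add (V := V) (b := (Real.pi * c : ℝ))
    (by simpa using mul_pos Real.pi_pos hc) 0 0).re
  refine this.congr (Filter.Eventually.of_forall fun t => ?_)
  simp only [gw]
  rw [show (-((Real.pi * c : ℝ):ℂ) * (‖t‖:ℂ) ^ 2 + 0 * ((inner ℝ (0:V) t : ℝ):ℂ)) =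
    ((-(Real.pi * c * ‖t‖ ^ 2) : ℝ) : ℂ) by push_cast; ring]
  rw [← Complex.ofReal_exp]; exact Complex.ofReal_re _

theorem gE_measurable (c : ℝ) : Measurable (gE c : V → ℝ≥0∞) :=
  (gw_continuous c).measurable.ennreal_ofReal

theorem gE_le_one {c : ℝ} (hc : 0 ≤ c) (t : V) : gE c t ≤ 1 := by
  unfold gE; simpa using gw_le_one hc t

theorem gE_lint {c : ℝ} (hc : 0 < c) : ∫⁻ t : V, gE c t ≠ ∞ := by
  have := (gw_integrable (V := V) hc).2.ne
  refine ne_of_eq_of_ne (lintegral_congr fun t => ?_) this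
  rw [gE, ← ofReal_norm, Real.norm_of_nonneg (gw_pos c t).le]

theorem gE_rpow (c k : ℝ) (hk : 0 ≤ k) (t : V) : gE c t ^ k = gE (c * k) t := by
  unfold gE gw
  rw [ENNReal.ofReal_rpow_of_nonneg (Real.exp_pos _).le hk, ← Real.exp_mul]
  congr 2; ring

theorem enorm_gw (c : ℝ) (t : V) : ‖(gw c t : ℂ)‖ₑ = gE c t := by
  rw [← ofReal_norm, gE, Complex.norm_real, Real.norm_of_nonneg (gw_pos c t).le]

theorem Good.mul_gw {f : V → ℂ} (hf : Good f) {c : ℝ} (hc : 0 ≤ c) (x : V) :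
    Good (fun t => f t * (gw c (t - x) : ℂ)) := by
  obtain ⟨h1, h2, M, h3⟩ := hf
  have hc' : Continuous fun t : V => ((gw c (t - x) : ℝ) : ℂ) :=
    Complex.continuous_ofReal.comp ((gw_continuous c).comp (continuous_id.sub continuous_const))
  have hb : ∀ t : V, ‖((gw c (t - x) : ℝ) : ℂ)‖ ≤ 1 := by
    intro t
    rw [Complex.norm_real, Real.norm_of_nonneg (gw_pos c _).le]
    exact gw_le_one hc _
  refine ⟨h1.mul hc'.measurable, h2.mul_bdd hc'.aestronglyMeasurable
    (Filter.Eventually.of_forall hb), M, fun t => ?_⟩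
  rw [norm_mul]
  calc _ ≤ ‖f t‖ * 1 := by gcongr; exact hb t
    _ ≤ M := by simpa using h3 t

theorem Good.lint_rpow {f : V → ℂ} (hf : Good f) {k : ℝ} (hk : 1 ≤ k) :
    ∫⁻ t, ‖f t‖ₑ ^ k ≠ ∞ := by
  obtain ⟨h1, h2, M, h3⟩ := hf
  have : ∫⁻ t, ‖f t‖ₑ ^ k ≤ ∫⁻ t, (ENNReal.ofReal M) ^ (k - 1) * ‖f t‖ₑ := by
    refine lintegral_mono fun t => ?_
    calc ‖f t‖ₑ ^ k = ‖f t‖ₑ ^ (k - 1) * ‖f t‖ₑ ^ (1:ℝ) := by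
          rw [← ENNReal.rpow_add_of_nonneg _ _ (by linarith) (by norm_num)]; congr 1; ring
      _ ≤ _ := by
          rw [ENNReal.rpow_one]
          gcongr
          rw [← ofReal_norm]; exact ENNReal.ofReal_le_ofReal (h3 t)
  refine ne_top_of_le_ne_top ?_ this
  have hk' : (ENNReal.ofReal M) ^ (k - 1) ≠ ∞ :=
    ENNReal.rpow_ne_top_of_nonneg (by linarith) ENNReal.ofReal_ne_top
  rw [lintegral_const_mul' _ _ hk']
  exact ENNReal.mul_ne_top hk' h2.2.ne

theorem Good.memLp2 {f : V → ℂ} (hf : Good f) : MemLp f 2 := by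
  refine ⟨hf.1.aestronglyMeasurable, ?_⟩
  rw [eLpNorm_eq_lintegral_rpow_enorm_toReal (by norm_num) (by norm_num)]
  refine ENNReal.rpow_lt_top_of_nonneg (by norm_num) ?_
  simpa using hf.lint_rpow (k := 2) (by norm_num)

theorem Vw_continuous {f : V → ℂ} (hf : Good f) {c : ℝ} (hc : 0 ≤ c) :
    Continuous (fun z : V × V => Vw c f z.1 z.2) := by
  unfold Vw
  simp only [Real.fourier_eq]
  refine continuous_of_dominated (bound := fun t => ‖f t‖) ?_ ?_ hf.2.1.norm ?_
  · intro z
    have := (Real.fourierIntegral_convergent_iff (μ := volume) z.2).2 (hf.mul_gw hc z.1).2.1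
    exact this.aestronglyMeasurable
  · intro z
    refine Filter.Eventually.of_forall fun t => ?_
    rw [Circle.norm_smul, norm_mul, Complex.norm_real, Real.norm_of_nonneg (gw_pos c _).le]
    exact mul_le_of_le_one_right (norm_nonneg _) (gw_le_one hc _)
  · refine Filter.Eventually.of_forall fun t => ?_
    simp only [Circle.smul_def]
    have h1 : Continuous fun z : V × V => gw c (t - z.1) :=
      (gw_continuous c).comp (by fun_prop)
    have h2 : Continuous fun z : V × V => ((Real.fourierChar (-(inner ℝ t z.2 : ℝ)) : Circle) : ℂ) := by
      have := Real.continuous_fourierChar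
      fun_prop
    exact h2.smul (continuous_const.mul (Complex.continuous_ofReal.comp h1))

theorem Vw_measurable {f : V → ℂ} (hf : Good f) {c : ℝ} (hc : 0 ≤ c) :
    Measurable (fun z : V × V => ‖Vw c f z.1 z.2‖ₑ) :=
  (Vw_continuous hf hc).measurable.enorm

/-- local `L^ρ` mass -/
noncomputable def Dm (c ρ : ℝ) (f : V → ℂ) (x : V) : ℝ≥0∞ :=
  ∫⁻ t, ‖f t‖ₑ ^ ρ * gE c (t - x)

theorem Dm_measurable (c ρ : ℝ) {f : V → ℂ} (hf : Measurable f) : Measurable (Dm c ρ f) := by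
  unfold Dm
  apply Measurable.lintegral_prod_right' (f := fun z : V × V => ‖f z.2‖ₑ ^ ρ * gE c (z.2 - z.1))
  exact ((hf.comp measurable_snd).enorm.pow_const _).mul
    ((gE_measurable c).comp (measurable_snd.sub measurable_fst))

theorem Dm_le {c : ℝ} (hc : 0 ≤ c) (ρ : ℝ) (f : V → ℂ) (x : V) :
    Dm c ρ f x ≤ ∫⁻ t, ‖f t‖ₑ ^ ρ :=
  lintegral_mono fun t => mul_le_of_le_one_right (zero_le) (gE_le_one hc _)

theorem Dm_lint (c : ℝ) (ρ : ℝ) {f : V → ℂ} (hf : Measurable f) :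
    ∫⁻ x, Dm c ρ f x = (∫⁻ t, ‖f t‖ₑ ^ ρ) * ∫⁻ t : V, gE c t := by
  unfold Dm
  rw [lintegral_lintegral_swap]
  · rw [← lintegral_mul_const _ (hf.enorm.pow_const _)]
    refine lintegral_congr fun t => ?_
    have hm : Measurable fun x => gE c (t - x) :=
      (gE_measurable c).comp (measurable_const.sub measurable_id)
    rw [lintegral_const_mul _ hm]
    congr 1
    exact lintegral_sub_left_eq_self (fun y => gE c y) t
  · apply Measurable.aemeasurable
    exact ((hf.comp measurable_snd).enorm.pow_const _).mul
      ((gE_measurable c).comp (measurable_snd.sub measurable_fst))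

theorem Dm_eq (c ρ : ℝ) (hρ : 0 ≤ ρ) (f : V → ℂ) (x : V) :
    ∫⁻ t, ‖f t * (gw c (t - x) : ℂ)‖ₑ ^ ρ = Dm (c * ρ) ρ f x := by
  unfold Dm
  refine lintegral_congr fun t => ?_
  rw [enorm_mul, ENNReal.mul_rpow_of_nonneg _ _ hρ, enorm_gw, gE_rpow _ _ hρ]

theorem stepA_aux (c ρ s : ℝ) (hc : 0 < c) (hρ1 : 1 ≤ ρ) (hs : 0 < s) (K : ℝ≥0∞)
    (hK : ∀ f : V → ℂ, Good f → ∀ x, ∫⁻ ω, ‖Vw c f x ω‖ₑ ^ s ≤ K * (Dm (c * ρ) ρ f x) ^ (s / ρ))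
    (f : V → ℂ) (hf : Good f) : ∃ R : V × V → ℝ≥0∞, Measurable R ∧
      (∀ x, ∫⁻ ω, R (x, ω) ≤ K) ∧ ∀ x ω, ‖Vw c f x ω‖ₑ ≤
        (Dm (c * ρ) ρ f x) ^ (1 / ρ) * R (x, ω) ^ (1 / s) := by
  have hDt : ∀ x, Dm (c * ρ) ρ f x ≠ ∞ := fun x =>
    ne_top_of_le_ne_top (hf.lint_rpow hρ1) (Dm_le (by positivity) _ _ _)
  have hρ : 0 < ρ := by linarith
  refine ⟨fun z => ‖Vw c f z.1 z.2‖ₑ ^ s / (Dm (c * ρ) ρ f z.1) ^ (s / ρ), ?_, ?_, ?_⟩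
  · exact ((Vw_measurable hf hc.le).pow_const _).div
      (((Dm_measurable _ _ hf.1).comp measurable_fst).pow_const _)
  · intro x
    have h := hK f hf x
    simp only [div_eq_mul_inv]
    have hm : Measurable fun ω => ‖Vw c f x ω‖ₑ ^ s :=
      ((Vw_measurable hf hc.le).comp (measurable_const.prodMk measurable_id)).pow_const _
    rw [lintegral_mul_const _ hm, ← div_eq_mul_inv]
    exact ENNReal.div_le_of_le_mul h
  · intro x ω
    simp only
    by_cases h0 : Dm (c * ρ) ρ f x = 0
    · have : ‖Vw c f x ω‖ₑ = 0 := by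
        rw [← Dm_eq c ρ hρ.le, lintegral_eq_zero_iff ((hf.mul_gw hc.le x).1.enorm.pow_const _)] at h0
        have : (fun t => f t * (gw c (t - x) : ℂ)) =ᵐ[volume] 0 := by
          filter_upwards [h0] with t ht
          simp only [Pi.zero_apply, ENNReal.rpow_eq_zero_iff] at ht
          rcases ht with ht | ht
          · simpa using ht.1
          · linarith [ht.2]
        rw [Vw, Real.fourier_congr_ae this]
        simp [Real.fourier_eq]
      rw [this]; exact zero_le
    · rw [ENNReal.div_rpow_of_nonneg _ _ (by positivity), ← ENNReal.rpow_mul, ← ENNReal.rpow_mul,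
        mul_one_div_cancel hs.ne', ENNReal.rpow_one, show s / ρ * (1 / s) = 1 / ρ by field_simp]
      rw [ENNReal.mul_div_cancel]
      · simp [ENNReal.rpow_eq_zero_iff, h0, hDt x]
      · exact ENNReal.rpow_ne_top_of_nonneg (by positivity) (hDt x)

theorem stepA (c σ : ℝ) (hc : 0 < c) (h0 : 0 ≤ σ) (h1 : σ ≤ 1) :
    ∃ K : ℝ≥0∞, K ≠ ∞ ∧ ∀ f : V → ℂ, Good f → ∃ R : V × V → ℝ≥0∞, Measurable R ∧
      (∀ x, ∫⁻ ω, R (x, ω) ≤ K) ∧ ∀ x ω, ‖Vw c f x ω‖ₑ ≤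
        (Dm (c * (1 / max (1/2) σ)) (1 / max (1/2) σ) f x) ^ (max (1/2) σ) *
          R (x, ω) ^ (min (1/2) (1 - σ)) := by
  rcases h1.eq_or_lt with rfl | h1
  · refine ⟨0, by simp, fun f hf => ⟨0, measurable_const, by simp, fun x ω => ?_⟩⟩
    have e : max (1/2) (1:ℝ) = 1 := by norm_num
    have e' : min (1/2) (1 - 1 : ℝ) = 0 := by norm_num
    rw [e, e']
    simp only [Pi.zero_apply, ENNReal.rpow_zero, mul_one, ENNReal.rpow_one, div_one]
    refine (enorm_fourier_le _ _).trans (le_of_eq ?_)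
    have := Dm_eq c 1 (by norm_num) f x
    simpa using this
  rcases le_or_gt σ (1/2) with h2 | h2
  · have e : max (1/2) σ = 1/2 := max_eq_left h2
    have e' : min (1/2) (1 - σ) = 1/2 := min_eq_left (by linarith)
    rw [e, e']
    refine ⟨1, by simp, fun f hf => ?_⟩
    have := stepA_aux c 2 2 hc (by norm_num) (by norm_num) 1 (fun f hf x => ?_) f hf
    · simpa using this
    · have := plancherel_lintegral (hf.mul_gw hc.le x).2.1 (hf.mul_gw hc.le x).memLp2
      rw [Dm_eq c 2 (by norm_num)] at this
      unfold Vw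
      rw [this]; norm_num
  · have e : max (1/2) σ = σ := max_eq_right h2.le
    have e' : min (1/2) (1 - σ) = 1 - σ := min_eq_right (by linarith)
    rw [e, e']
    have hσ1 : 1 < 1 / σ := by rw [lt_div_iff₀ (by linarith)]; linarith
    have hσ2 : 1 / σ < 2 := by rw [div_lt_iff₀ (by linarith)]; linarith
    have hh := fun (f : V → ℂ) (hf : Good f) (x : V) => HY (V := V) (1/σ) (1/(1-σ)) hσ1 hσ2 (by
      have : 1 - σ ≠ 0 := by linarith
      have : σ ≠ 0 := by linarith
      field_simp) (h := fun t => f t * (gw c (t - x) : ℂ)) (Good.mul_gw hf hc.le x).1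
        (Good.mul_gw hf hc.le x).2.1 (Good.mul_gw hf hc.le x).memLp2
    refine ⟨ENNReal.ofReal (1/(1-σ) * (4 * (2 ^ (1/(1-σ) - 2) / (1/(1-σ) - 2)))),
      ENNReal.ofReal_ne_top, fun f hf => ?_⟩
    have hs : 0 < 1 - σ := by linarith
    have := stepA_aux c (1/σ) (1/(1-σ)) hc hσ1.le (by positivity)
      (ENNReal.ofReal (1/(1-σ) * (4 * (2 ^ (1/(1-σ) - 2) / (1/(1-σ) - 2))))) (fun f hf x => by
        rw [← Dm_eq c (1/σ) (by linarith)]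
        exact hh f hf x) f hf
    simpa only [one_div_one_div] using this

theorem stepB (c : ℝ) (r : ℝ≥0∞) (hc : 0 < c) (hr : 1 ≤ r) :
    ∃ K : ℝ≥0∞, K ≠ ∞ ∧ ∀ f : V → ℂ, Good f → ∃ Z : V → ℝ≥0∞, Measurable Z ∧
      (∫⁻ x, Z x ≤ K) ∧ ∀ x, 
        (Dm (c * (1 / max (1/2) (invR r))) (1 / max (1/2) (invR r)) f x) ^ (max (1/2) (invR r)) ≤
          K * eLpNorm f r volume * Z x ^ (min (1/2) (invR r)) := by
  by_cases hrt : r = ∞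
  · subst hrt
    have e0 : invR ∞ = 0 := by simp [invR]
    have e : max (1/2) (0:ℝ) = 1/2 := by norm_num
    have e' : min (1/2) (0 : ℝ) = 0 := by norm_num
    rw [e0, e, e']
    refine ⟨(∫⁻ t : V, gE (c * (1 / (1/2))) t) ^ ((1:ℝ)/2), ?_, fun f hf => ⟨0, measurable_const, by simp, fun x => ?_⟩⟩
    · exact ENNReal.rpow_ne_top_of_nonneg (by norm_num) (gE_lint (by positivity))
    · simp only [Pi.zero_apply, ENNReal.rpow_zero, mul_one]
      have : Dm (c * (1 / (1/2))) (1 / (1/2)) f x ≤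
          (∫⁻ t : V, gE (c * (1 / (1/2))) t) * (eLpNorm f ∞ volume) ^ ((1:ℝ)/(1/2)) := by
        unfold Dm
        have hm : Measurable fun t => gE (c * (1 / (1/2))) (t - x) :=
          (gE_measurable _).comp (measurable_id.sub measurable_const)
        rw [mul_comm (∫⁻ t : V, gE (c * (1 / (1/2))) t),
          ← lintegral_sub_right_eq_self (fun t => gE (c * (1 / (1/2))) t) x,
          ← lintegral_const_mul _ hm]
        apply lintegral_mono_ae
        rw [eLpNorm_exponent_top]
        filter_upwards [ae_le_eLpNormEssSup (f := f)] with t ht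
        gcongr
      refine (ENNReal.rpow_le_rpow this (by norm_num)).trans (le_of_eq ?_)
      rw [ENNReal.mul_rpow_of_nonneg _ _ (by norm_num), ← ENNReal.rpow_mul]
      norm_num
  have hr0 : r ≠ 0 := by rintro rfl; simp at hr
  set ρ := r.toReal with hρ
  have hρ1 : 1 ≤ ρ := by
    have := ENNReal.toReal_mono hrt hr
    simpa using this
  have hρ0 : 0 < ρ := by linarith
  have einv : invR r = 1 / ρ := by simp [invR, hρ]
  rw [einv]
  have hNorm : ∀ f : V → ℂ, eLpNorm f r volume = (∫⁻ t, ‖f t‖ₑ ^ ρ) ^ (1 / ρ) := fun f =>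
    eLpNorm_eq_lintegral_rpow_enorm_toReal hr0 hrt
  have hdiv : ∀ (c' : ℝ), 0 < c' → ∀ f : V → ℂ, Good f → ∫⁻ x, Dm c' ρ f x / (∫⁻ t, ‖f t‖ₑ ^ ρ)
      ≤ ∫⁻ t : V, gE c' t := by
    intro c' hc' f hf
    simp only [div_eq_mul_inv]
    rw [lintegral_mul_const _ (Dm_measurable _ _ hf.1), Dm_lint _ _ hf.1, ← div_eq_mul_inv]
    apply ENNReal.div_le_of_le_mul
    rw [mul_comm]
  have hNt : ∀ f : V → ℂ, Good f → (∫⁻ t, ‖f t‖ₑ ^ ρ) ≠ ∞ := fun f hf => hf.lint_rpow hρ1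
  have hcancel : ∀ (c' : ℝ), 0 < c' → ∀ f : V → ℂ, Good f → ∀ x, Dm c' ρ f x =
      (∫⁻ t, ‖f t‖ₑ ^ ρ) * (Dm c' ρ f x / (∫⁻ t, ‖f t‖ₑ ^ ρ)) := by
    intro c' hc' f hf x
    by_cases h0 : (∫⁻ t, ‖f t‖ₑ ^ ρ) = 0
    · have := Dm_le hc'.le ρ f x
      rw [h0] at this
      rw [le_antisymm this (zero_le), h0]; simp
    · rw [ENNReal.mul_div_cancel h0 (hNt f hf)]
  rcases le_or_gt ρ 2 with h2 | h2
  · have h2' : 1/2 ≤ 1/ρ := one_div_le_one_div_of_le hρ0 h2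
    rw [max_eq_right h2', min_eq_left h2', one_div_one_div]
    refine ⟨max 1 (∫⁻ t : V, gE (c * ρ) t), ?_, fun f hf =>
      ⟨fun x => Dm (c * ρ) ρ f x / (∫⁻ t, ‖f t‖ₑ ^ ρ), (Dm_measurable _ _ hf.1).div_const _,
        (hdiv _ (by positivity) f hf).trans (le_max_right _ _), fun x => ?_⟩⟩
    · exact (max_lt (by simp) (gE_lint (by positivity)).lt_top).ne
    · have hle : Dm (c * ρ) ρ f x / (∫⁻ t, ‖f t‖ₑ ^ ρ) ≤ 1 :=
        ENNReal.div_le_of_le_mul (by simpa using Dm_le (by positivity) ρ f x)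
      rw [hNorm]
      conv_lhs => rw [hcancel (c * ρ) (by positivity) f hf x]
      rw [ENNReal.mul_rpow_of_nonneg _ _ (by positivity)]
      refine mul_le_mul' ?_ (ENNReal.rpow_le_rpow_of_exponent_ge hle h2')
      exact le_mul_of_one_le_left (zero_le) (le_max_left _ _)
  · have h2' : 1/ρ ≤ 1/2 := one_div_le_one_div_of_le (by norm_num) h2.le
    rw [max_eq_left h2', min_eq_right h2', one_div_one_div]
    set I := ∫⁻ t : V, gE (c * 2) t with hI
    have hIt : I ≠ ∞ := gE_lint (by positivity)
    have hp1 : 0 ≤ 1 - 2 / ρ := by rw [sub_nonneg, div_le_one hρ0]; exact h2.le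
    refine ⟨max (I ^ ((1 - 2 / ρ) * (1/2))) I, ?_, fun f hf =>
      ⟨fun x => Dm (c * 2) ρ f x / (∫⁻ t, ‖f t‖ₑ ^ ρ), (Dm_measurable _ _ hf.1).div_const _,
        (hdiv _ (by positivity) f hf).trans (le_max_right _ _), fun x => ?_⟩⟩
    · refine (max_lt ?_ hIt.lt_top).ne
      exact ENNReal.rpow_lt_top_of_nonneg (by positivity) hIt
    · have hH : Dm (c * 2) 2 f x ≤ (Dm (c * 2) ρ f x) ^ (2 / ρ) * I ^ (1 - 2 / ρ) := by
        have := ENNReal.lintegral_mul_norm_pow_le (μ := (volume : Measure V))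
          (f := fun t => ‖f t‖ₑ ^ ρ * gE (c * 2) (t - x)) (g := fun t => gE (c * 2) (t - x))
          (p := 2 / ρ) (q := 1 - 2 / ρ)
          ((hf.1.enorm.pow_const _).mul
            ((gE_measurable _).comp (measurable_id.sub measurable_const))).aemeasurable
          ((gE_measurable _).comp (measurable_id.sub measurable_const)).aemeasurable
          (by positivity) hp1 (by ring)
        rw [lintegral_sub_right_eq_self (fun t => gE (c * 2) t) x] at this
        refine le_trans (le_of_eq ?_) this
        unfold Dm
        refine lintegral_congr fun t => ?_
        rw [ENNReal.mul_rpow_of_nonneg _ _ (by positivity), mul_assoc,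
          ← ENNReal.rpow_add_of_nonneg _ _ (by positivity) hp1, ← ENNReal.rpow_mul]
        simp [hρ0.ne', mul_div_cancel₀]
      refine (ENNReal.rpow_le_rpow hH (by norm_num)).trans ?_
      rw [hNorm, ENNReal.mul_rpow_of_nonneg _ _ (by norm_num), ← ENNReal.rpow_mul,
        ← ENNReal.rpow_mul, show 2 / ρ * (1 / 2) = 1 / ρ by ring]
      conv_lhs => rw [hcancel (c * 2) (by positivity) f hf x]
      rw [ENNReal.mul_rpow_of_nonneg _ _ (by positivity), mul_comm, ← mul_assoc]
      gcongr
      exact le_max_left _ _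

theorem windowBound (c : ℝ) (r : ℝ≥0∞) (hc : 0 < c) (hr : 1 ≤ r) :
    ∃ K : ℝ≥0∞, K ≠ ∞ ∧ ∀ f : V → ℂ, Good f → ∃ (Z : V → ℝ≥0∞) (R : V × V → ℝ≥0∞),
      Measurable Z ∧ Measurable R ∧ (∫⁻ x, Z x ≤ K) ∧ (∀ x, ∫⁻ ω, R (x, ω) ≤ K) ∧
      ∀ x ω, ‖Vw c f x ω‖ₑ ≤ K * eLpNorm f r volume *
        (Z x ^ (min (1/2) (invR r)) * R (x, ω) ^ (min (1/2) (1 - invR r))) := by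
  have h1 : invR r ≤ 1 := by
    have := ENNReal.toReal_mono (by simp) (ENNReal.inv_le_one.2 hr)
    simpa [invR] using this
  obtain ⟨K1, hK1, A⟩ := stepA (V := V) c (invR r) hc ENNReal.toReal_nonneg h1
  obtain ⟨K2, hK2, B⟩ := stepB (V := V) c r hc hr
  refine ⟨max K1 K2, by simp [hK1, hK2], fun f hf => ?_⟩
  obtain ⟨R, a1, a2, a3⟩ := A f hf
  obtain ⟨Z, b1, b2, b3⟩ := B f hf
  refine ⟨Z, R, b1, a1, b2.trans (le_max_right _ _), fun x => (a2 x).trans (le_max_left _ _),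
    fun x ω => (a3 x ω).trans ?_⟩
  refine (mul_le_mul_left (b3 x) _).trans ?_
  rw [mul_assoc]
  gcongr
  exact le_max_right _ _
end Win

section Repro
set_option linter.unusedSectionVars false
variable {V : Type*} [NormedAddCommGroup V] [InnerProductSpace ℝ V]
    [FiniteDimensional ℝ V] [MeasurableSpace V] [BorelSpace V]

/-- `exp (2 pi i s)` -/
noncomputable def ch (s : ℝ) : ℂ := Complex.exp ((2 * Real.pi * s : ℝ) * Complex.I)

theorem norm_ch (s : ℝ) : ‖ch s‖ = 1 := Complex.norm_exp_ofReal_mul_I _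

theorem enorm_ch (s : ℝ) : ‖ch s‖ₑ = 1 := by rw [← ofReal_norm, norm_ch]; simp

theorem ch_add (s t : ℝ) : ch (s + t) = ch s * ch t := by
  rw [ch, ch, ch, ← Complex.exp_add]; push_cast; congr 1; ring

theorem ch_continuous : Continuous ch := by
  unfold ch; fun_prop

open FourierTransform in
theorem fourier_ch (f : V → ℂ) (w : V) : 𝓕 f w = ∫ t, ch (-(inner ℝ t w : ℝ)) * f t := by
  rw [Real.fourier_eq']
  refine integral_congr_ae (Filter.Eventually.of_forall fun t => ?_)
  simp only [ch, smul_eq_mul]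
  congr 3
  push_cast; ring

theorem Good.mul_ch {f : V → ℂ} (hf : Good f) {φ : V → ℝ} (hφ : Continuous φ) :
    Good (fun t => f t * ch (φ t)) := by
  obtain ⟨h1, h2, M, h3⟩ := hf
  have hc := ch_continuous.comp hφ
  refine ⟨h1.mul hc.measurable, h2.mul_bdd (c := 1) hc.aestronglyMeasurable
      (Filter.Eventually.of_forall fun t => (norm_ch _).le), M, fun t => ?_⟩
  rw [norm_mul, norm_ch, mul_one]; exact h3 t

open FourierTransform in
theorem fourier_gw {c : ℝ} (hc : 0 < c) (w : V) :
    𝓕 (fun t : V => (gw c t : ℂ)) w =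
      ((Real.pi : ℂ) / ((Real.pi * c : ℝ) : ℂ)) ^ (Module.finrank ℝ V / 2 : ℂ) * (gw (1 / c) w : ℂ) := by
  have := fourier_gaussian_innerProductSpace (V := V) (b := ((Real.pi * c : ℝ) : ℂ))
    (by simpa using mul_pos Real.pi_pos hc) w
  have e : (fun t : V => (gw c t : ℂ)) = fun v : V => Complex.exp (-((Real.pi * c : ℝ) : ℂ) * (‖v‖ : ℂ) ^ 2) := by
    ext t; simp only [gw]; push_cast; congr 1; ring
  rw [e, this]
  congr 1
  simp only [gw]; push_cast; congr 1
  have h1 : (c : ℂ) ≠ 0 := by exact_mod_cast hc.ne'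
  have h2 : (Real.pi : ℂ) ≠ 0 := by exact_mod_cast Real.pi_pos.ne'
  field_simp

open FourierTransform in
theorem fourier_gw_one (w : V) :
    𝓕 (fun t : V => (gw 1 t : ℂ)) w = (gw 1 w : ℂ) := by
  rw [fourier_gw one_pos]
  have h2 : (Real.pi : ℂ) ≠ 0 := by exact_mod_cast Real.pi_pos.ne'
  simp [h2]

/-- constant in the Fourier transform of `gw c` -/
noncomputable def cF (V : Type*) [NormedAddCommGroup V] [InnerProductSpace ℝ V] (c : ℝ) : ℝ≥0∞ :=
  ‖((Real.pi : ℂ) / ((Real.pi * c : ℝ) : ℂ)) ^ (Module.finrank ℝ V / 2 : ℂ)‖ₑ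

open FourierTransform in
theorem enorm_fourier_gw {c : ℝ} (hc : 0 < c) (m w : V) :
    ‖𝓕 (fun t : V => (gw c (t - m) : ℂ)) w‖ₑ = cF V c * gE (1 / c) w := by
  have h := congrFun (VectorFourier.fourierIntegral_comp_add_right Real.fourierChar
    (volume : Measure V) (innerₗ V) (fun t : V => (gw c t : ℂ)) (-m)) w
  have e : (fun t : V => (gw c (t - m) : ℂ)) = (fun t : V => (gw c t : ℂ)) ∘ fun v => v + -m := by
    ext t; simp [sub_eq_add_neg]
  have h' : 𝓕 (fun t : V => (gw c (t - m) : ℂ)) w = Real.fourierChar (innerₗ V (-m) w) •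
      𝓕 (fun t : V => (gw c t : ℂ)) w := by
    rw [e]; exact h
  rw [h', Circle.smul_def, smul_eq_mul, enorm_mul, fourier_gw hc, enorm_mul, enorm_gw, cF,
    ← ofReal_norm, Circle.norm_coe]
  simp

theorem good_gw {c : ℝ} (hc : 0 < c) (m : V) : Good (fun t : V => (gw c (t - m) : ℂ)) := by
  refine ⟨?_, ((gw_integrable hc).comp_sub_right m).ofReal, 1, fun t => ?_⟩
  · exact Complex.measurable_ofReal.comp ((gw_continuous c).measurable.comp
      (measurable_id.sub measurable_const))
  · rw [Complex.norm_real, Real.norm_of_nonneg (gw_pos c _).le]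
    exact gw_le_one hc.le _

theorem gw_mul (c c' : ℝ) (t : V) : gw c t * gw c' t = gw (c + c') t := by
  unfold gw; rw [← Real.exp_add]; congr 1; ring

theorem lemma1 {a H : V → ℂ} (ha : Good a) (hH : Good H) :
    ‖∫ t, a t * H t‖ₑ * (∫⁻ t : V, gE 2 t) ≤
      ∫⁻ z, ∫⁻ ζ, ‖Vw 1 a z ζ‖ₑ * ‖Vw 1 H z (-ζ)‖ₑ := by
  have hint : Integrable (fun t => a t * H t) := by
    obtain ⟨M, hM⟩ := hH.2.2
    exact ha.2.1.mul_bdd hH.1.aestronglyMeasurable (Filter.Eventually.of_forall hM)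
  have hg2 : Integrable (fun t : V => (gw 2 t : ℂ)) := (gw_integrable (by norm_num)).ofReal
  have hconv := hint.convolution_integrand (ContinuousLinearMap.mul ℝ ℂ) hg2
  simp only [ContinuousLinearMap.mul_apply'] at hconv
  have hsw := integral_integral_swap (f := fun z t : V => a t * H t * (gw 2 (z - t) : ℂ)) hconv
  have e1 : ∫ t, ∫ z, a t * H t * (gw 2 (z - t) : ℂ) = (∫ t, a t * H t) * ∫ t : V, (gw 2 t : ℂ) := by
    rw [← integral_mul_const]
    refine integral_congr_ae (Filter.Eventually.of_forall fun t => ?_)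
    simp only
    rw [integral_const_mul]
    congr 1
    exact integral_sub_right_eq_self (fun z : V => (gw 2 z : ℂ)) t
  have e2 : ‖∫ t : V, (gw 2 t : ℂ)‖ₑ = ∫⁻ t : V, gE 2 t := by
    rw [show ∫ t : V, (gw 2 t : ℂ) = ((∫ t : V, gw 2 t : ℝ) : ℂ) from integral_ofReal, ← ofReal_norm, Complex.norm_real,
      Real.norm_of_nonneg (integral_nonneg fun t => (gw_pos 2 t).le),
      ofReal_integral_eq_lintegral_ofReal (gw_integrable (by norm_num))
        (Filter.Eventually.of_forall fun t => (gw_pos 2 t).le)]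
    rfl
  rw [← e2, ← enorm_mul, ← e1, ← hsw]
  refine (enorm_integral_le_lintegral_enorm _).trans (lintegral_mono fun z => ?_)
  have e3 : ∫ t, a t * H t * (gw 2 (z - t) : ℂ) =
      ∫ t, (a t * (gw 1 (t - z) : ℂ)) * (H t * (gw 1 (t - z) : ℂ)) := by
    refine integral_congr_ae (Filter.Eventually.of_forall fun t => ?_)
    simp only
    rw [← neg_sub t z, gw_neg, show (2:ℝ) = 1 + 1 by norm_num, ← gw_mul]
    push_cast; ring
  have ga := ha.mul_gw zero_le_one z
  have gH := hH.mul_gw zero_le_one z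
  simp only
  rw [e3, parseval' gH.2.1 gH.memLp2 ga.2.1 ga.memLp2]
  refine (enorm_integral_le_lintegral_enorm _).trans (le_of_eq ?_)
  refine lintegral_congr fun ζ => ?_
  rw [enorm_mul]; rfl

theorem gw_prod (z z' t : V) : gw 1 (t - z) * gw 1 (t - z') =
    gw (1/2) (z - z') * gw 2 (t - (1/2 : ℝ) • (z + z')) := by
  unfold gw; rw [← Real.exp_add, ← Real.exp_add]; congr 1
  have e : ‖t - z‖ ^ 2 + ‖t - z'‖ ^ 2 = (1/2) * ‖z - z'‖ ^ 2 + 2 * ‖t - (1/2 : ℝ) • (z + z')‖ ^ 2 := by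
    simp only [← real_inner_self_eq_norm_sq, inner_sub_left, inner_sub_right, inner_smul_left,
      inner_smul_right, inner_add_left, inner_add_right, real_inner_comm]
    simp; ring
  linear_combination (-Real.pi) * e

open FourierTransform in
theorem repro_aux (z ζ z' ζ' : V) :
    ‖Vw 1 (fun t => (gw 1 (t - z) : ℂ) * ch (-(inner ℝ t ζ : ℝ))) z' (-ζ')‖ₑ =
      cF V 2 * (gE (1/2) (z - z') * gE (1/2) (ζ - ζ')) := by
  have : Vw 1 (fun t => (gw 1 (t - z) : ℂ) * ch (-(inner ℝ t ζ : ℝ))) z' (-ζ') = (gw (1/2) (z - z') : ℂ) *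
      𝓕 (fun t : V => (gw 2 (t - (1/2 : ℝ) • (z + z')) : ℂ)) (ζ - ζ') := by
    rw [Vw, fourier_ch, fourier_ch, ← integral_const_mul]
    refine integral_congr_ae (Filter.Eventually.of_forall fun t => ?_)
    simp only
    have hg : ((gw 1 (t - z) : ℝ) : ℂ) * (gw 1 (t - z') : ℂ) = (gw (1/2) (z - z') : ℂ) *
      (gw 2 (t - (1/2 : ℝ) • (z + z')) : ℂ) := by exact_mod_cast gw_prod z z' t
    have hc : ch (-(inner ℝ t (ζ - ζ') : ℝ)) = ch (-(inner ℝ t ζ : ℝ)) * ch (-(inner ℝ t (-ζ') : ℝ)) := by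
      rw [← ch_add]
      congr 1
      rw [inner_sub_right, inner_neg_right]; ring
    rw [hc]
    linear_combination (ch (-(inner ℝ t ζ : ℝ)) * ch (-(inner ℝ t (-ζ') : ℝ))) * hg
  rw [this, enorm_mul, enorm_gw, enorm_fourier_gw two_pos, mul_left_comm]

theorem repro {a : V → ℂ} (ha : Good a) (z ζ : V) :
    ‖Vw 1 a z ζ‖ₑ * (∫⁻ t : V, gE 2 t) ≤ cF V 2 *
      ∫⁻ z', ∫⁻ ζ', ‖Vw 1 a z' ζ'‖ₑ * (gE (1/2) (z - z') * gE (1/2) (ζ - ζ')) := by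
  have hH : Good (fun t => (gw 1 (t - z) : ℂ) * ch (-(inner ℝ t ζ : ℝ))) :=
    (good_gw one_pos z).mul_ch (by fun_prop)
  have h1 := lemma1 ha hH
  have e1 : ∫ t, a t * ((gw 1 (t - z) : ℂ) * ch (-(inner ℝ t ζ : ℝ))) = Vw 1 a z ζ := by
    rw [Vw, fourier_ch]
    refine integral_congr_ae (Filter.Eventually.of_forall fun t => ?_)
    simp only; ring
  rw [e1] at h1
  refine h1.trans (le_of_eq ?_)
  have hm := Vw_measurable ha zero_le_one
  have hm2 : Measurable fun p : V × V => ‖Vw 1 a p.1 p.2‖ₑ * (gE (1/2) (z - p.1) * gE (1/2) (ζ - p.2)) :=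
    hm.mul (((gE_measurable _).comp (measurable_const.sub measurable_fst)).mul
      ((gE_measurable _).comp (measurable_const.sub measurable_snd)))
  have hm4 : Measurable fun z' => ∫⁻ ζ', ‖Vw 1 a z' ζ'‖ₑ * (gE (1/2) (z - z') * gE (1/2) (ζ - ζ')) :=
    hm2.lintegral_prod_right'
  rw [← lintegral_const_mul _ hm4]
  refine lintegral_congr fun z' => ?_
  have hm3 : Measurable fun ζ' : V => ‖Vw 1 a z' ζ'‖ₑ * (gE (1/2) (z - z') * gE (1/2) (ζ - ζ')) :=
    (hm2.comp (measurable_prodMk_left (x := z')) :)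
  rw [← lintegral_const_mul _ hm3]
  refine lintegral_congr fun ζ' => ?_
  rw [repro_aux, mul_left_comm]
end Repro

section Sym
set_option linter.unusedSectionVars false
variable {V : Type*} [NormedAddCommGroup V] [InnerProductSpace ℝ V]
    [FiniteDimensional ℝ V] [MeasurableSpace V] [BorelSpace V]

theorem gE_lint_ne_zero (c : ℝ) : ∫⁻ t : V, gE c t ≠ 0 := by
  rw [Ne, lintegral_eq_zero_iff (gE_measurable c)]
  intro h
  have h2 : ∀ t : V, gE c t ≠ 0 := fun t => by
    simpa [gE] using gw_pos c t
  have : (volume : Measure V) Set.univ = 0 := by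
    rw [Filter.EventuallyEq, ae_iff] at h
    convert h using 2
    ext t; simpa using h2 t
  exact (IsOpen.measure_ne_zero _ isOpen_univ Set.univ_nonempty) this

theorem invR_of_ne_top {p : ℝ≥0∞} : invR p = 1 / p.toReal := by simp [invR]

theorem one_le_toReal' {p : ℝ≥0∞} (hp : 1 ≤ p) (hpt : p ≠ ∞) : 1 ≤ p.toReal := by
  have := ENNReal.toReal_mono hpt hp
  simpa using this

theorem sym_p (p : ℝ≥0∞) (hp : 1 ≤ p) (A : V × V → ℝ≥0∞) (hA : Continuous A) :
    ∃ (B : V → ℝ≥0∞) (P : V × V → ℝ≥0∞), Measurable B ∧ Measurable P ∧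
      (∀ ζ, B ζ ≤ lqNorm volume p fun z => A (z, ζ)) ∧ (∀ ζ, ∫⁻ z, P (z, ζ) ≤ 1) ∧
      ∀ ζ, B ζ ≠ ∞ → ∀ᵐ z, A (z, ζ) ≤ B ζ * P (z, ζ) ^ (invR p) := by
  by_cases hpt : p = ∞
  · subst hpt
    obtain ⟨D, hD, hDd⟩ := TopologicalSpace.exists_countable_dense V
    have hle : ∀ ζ z, A (z, ζ) ≤ essSup (fun z => A (z, ζ)) volume := by
      intro ζ z
      by_contra hlt
      push Not at hlt
      have hopen : IsOpen {z | essSup (fun z => A (z, ζ)) volume < A (z, ζ)} :=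
        isOpen_lt continuous_const (by fun_prop)
      have h0 : volume {z | essSup (fun z => A (z, ζ)) volume < A (z, ζ)} = 0 := by
        have := ENNReal.ae_le_essSup (μ := volume) (fun z => A (z, ζ))
        rw [ae_iff] at this
        simpa using this
      rw [hopen.measure_eq_zero_iff (μ := volume)] at h0
      have : z ∈ {z | essSup (fun z => A (z, ζ)) volume < A (z, ζ)} := hlt
      rw [h0] at this
      exact this
    refine ⟨fun ζ => ⨆ z ∈ D, A (z, ζ), 0, ?_, measurable_const, ?_, by simp, ?_⟩
    · exact Measurable.biSup D hD fun z _ => by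
        have : Continuous fun ζ => A (z, ζ) := by fun_prop
        exact this.measurable
    · intro ζ
      simp only [lqNorm, if_true]
      exact iSup₂_le fun z _ => hle ζ z
    · intro ζ _
      refine Filter.Eventually.of_forall fun z => ?_
      simp only [invR, ENNReal.inv_top, ENNReal.toReal_zero, ENNReal.rpow_zero, mul_one]
      have hcl : IsClosed {z | A (z, ζ) ≤ ⨆ z ∈ D, A (z, ζ)} :=
        isClosed_le (by fun_prop) continuous_const
      have : closure D ⊆ {z | A (z, ζ) ≤ ⨆ z ∈ D, A (z, ζ)} :=
        hcl.closure_subset_iff.2 fun z hz => le_iSup₂ (f := fun z (_ : z ∈ D) => A (z, ζ)) z hz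
      rw [hDd.closure_eq] at this
      exact this (Set.mem_univ z)
  · have h1 := one_le_toReal' hp hpt
    have hp0 : 0 < p.toReal := by linarith
    set s := p.toReal with hs
    have hAm : Measurable A := hA.measurable
    have hI : Measurable fun ζ => ∫⁻ z, A (z, ζ) ^ s :=
      Measurable.lintegral_prod_left' (f := fun x : V × V => A x ^ s) (hAm.pow_const _)
    have hAz : ∀ ζ, Measurable fun z => A (z, ζ) := fun ζ => by
      have : Continuous fun z => A (z, ζ) := by fun_prop
      exact this.measurable
    refine ⟨fun ζ => (∫⁻ z, A (z, ζ) ^ s) ^ (1 / s), fun x => A x ^ s / ∫⁻ z, A (z, x.2) ^ s,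
      hI.pow_const _, (hAm.pow_const _).div (hI.comp measurable_snd), ?_, ?_, ?_⟩
    · intro ζ
      rw [lqNorm, if_neg hpt]
    · intro ζ
      simp only [div_eq_mul_inv]
      rw [lintegral_mul_const _ ((hAz ζ).pow_const _)]
      exact ENNReal.mul_inv_le_one _
    · intro ζ hζ
      have hIt : ∫⁻ z, A (z, ζ) ^ s ≠ ∞ := by
        intro h; simp only [h] at hζ
        exact hζ (ENNReal.top_rpow_of_pos (by positivity))
      by_cases h0 : ∫⁻ z, A (z, ζ) ^ s = 0
      · rw [lintegral_eq_zero_iff ((hAz ζ).pow_const _)] at h0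
        filter_upwards [h0] with z hz
        simp only [Pi.zero_apply, ENNReal.rpow_eq_zero_iff] at hz
        rcases hz with hz | hz
        · rw [hz.1]; exact zero_le
        · linarith [hz.2]
      · refine Filter.Eventually.of_forall fun z => ?_
        simp only
        rw [invR_of_ne_top, ← hs, ENNReal.div_rpow_of_nonneg _ _ (by positivity), ← ENNReal.rpow_mul,
          mul_one_div_cancel hp0.ne', ENNReal.rpow_one, ENNReal.mul_div_cancel]
        · simp [ENNReal.rpow_eq_zero_iff, h0, hIt]
        · exact hζ

theorem symbolBound (p q : ℝ≥0∞) (hp : 1 ≤ p) (hq : 1 ≤ q) (hqt : q ≠ ∞) (α : ℝ) (h0 : 0 ≤ α)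
    (h1 : α ≤ invR p) :
    ∃ K : ℝ≥0∞, K ≠ ∞ ∧ ∀ a : V → ℂ, Good a →
      (lqNorm volume q fun ω => lqNorm volume p fun x : V => ‖Vw 1 a x ω‖ₑ) ≠ ∞ →
      ∃ (X : V → ℝ≥0∞) (S : V × V → ℝ≥0∞), Measurable X ∧ Measurable S ∧
      (∫⁻ ζ, X ζ ≤ 1) ∧ (∀ ζ, ∫⁻ z, S (z, ζ) ≤ K) ∧
      ∀ z ζ, ‖Vw 1 a z ζ‖ₑ ≤ K *
        (lqNorm volume q fun ω => lqNorm volume p fun x : V => ‖Vw 1 a x ω‖ₑ) *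
        ∫⁻ η, gE (1/2) η * (X (ζ - η) ^ (invR q) * S (z, ζ - η) ^ α) := by
  set I := ∫⁻ t : V, gE (1/2) t with hI
  have hIt : I ≠ ∞ := gE_lint (by norm_num)
  have hp1 : invR p ≤ 1 := by
    have := ENNReal.toReal_mono (by simp) (ENNReal.inv_le_one.2 hp)
    simpa [invR] using this
  have hp0 : 0 ≤ invR p := ENNReal.toReal_nonneg
  have hc2 := gE_lint_ne_zero (V := V) 2
  have hcF : cF V 2 ≠ ∞ := by unfold cF; exact enorm_ne_top
  refine ⟨max I (cF V 2 * I ^ (1 - invR p) / ∫⁻ t : V, gE 2 t), ?_, ?_⟩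
  · refine (max_lt hIt.lt_top (ENNReal.div_lt_top ?_ hc2)).ne
    exact ENNReal.mul_ne_top hcF (ENNReal.rpow_ne_top_of_nonneg (by linarith) hIt)
  intro a ha hN
  set N := (lqNorm volume q fun ω => lqNorm volume p fun x : V => ‖Vw 1 a x ω‖ₑ) with hNdef
  have hAc : Continuous fun x : V × V => ‖Vw 1 a x.1 x.2‖ₑ := (Vw_continuous ha zero_le_one).enorm
  obtain ⟨B, P, hB, hP, hBle, hPint, hAB⟩ := sym_p p hp _ hAc
  have hq1 := one_le_toReal' hq hqt
  set s := q.toReal with hs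
  have hs0 : 0 < s := by linarith
  have hNs : N ^ s = ∫⁻ ζ, (lqNorm volume p fun x : V => ‖Vw 1 a x ζ‖ₑ) ^ s := by
    rw [hNdef, lqNorm, if_neg hqt, ← ENNReal.rpow_mul, one_div_mul_cancel hs0.ne', ENNReal.rpow_one]
  have hBN : ∫⁻ ζ, B ζ ^ s ≤ N ^ s := by
    rw [hNs]; exact lintegral_mono fun ζ => ENNReal.rpow_le_rpow (hBle ζ) hs0.le
  have hNst : N ^ s ≠ ∞ := ENNReal.rpow_ne_top_of_nonneg hs0.le hN
  have hBfin : ∀ᵐ ζ, B ζ ≠ ∞ := by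
    have := ae_lt_top (hB.pow_const s) (ne_top_of_le_ne_top hNst hBN)
    filter_upwards [this] with ζ hζ h
    rw [h, ENNReal.top_rpow_of_pos hs0] at hζ
    exact lt_irrefl _ hζ
  have hGm : Measurable (gE (1/2) : V → ℝ≥0∞) := gE_measurable _
  set X : V → ℝ≥0∞ := fun ζ => B ζ ^ s / N ^ s with hX
  have hBX : ∀ᵐ ζ, B ζ ≤ N * X ζ ^ (invR q) := by
    have hiq : invR q = 1 / s := invR_of_ne_top
    by_cases hN0 : N = 0
    · have : ∫⁻ ζ, B ζ ^ s = 0 := by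
        rw [hN0, ENNReal.zero_rpow_of_pos hs0] at hBN; exact le_antisymm hBN zero_le
      rw [lintegral_eq_zero_iff (hB.pow_const _)] at this
      filter_upwards [this] with ζ hz
      simp only [Pi.zero_apply, ENNReal.rpow_eq_zero_iff] at hz
      rcases hz with hz | hz
      · rw [hz.1]; exact zero_le
      · linarith [hz.2]
    · refine Filter.Eventually.of_forall fun ζ => ?_
      simp only [hX]
      rw [hiq, ENNReal.div_rpow_of_nonneg _ _ (by positivity), ← ENNReal.rpow_mul, ← ENNReal.rpow_mul,
        mul_one_div_cancel hs0.ne', ENNReal.rpow_one, ENNReal.rpow_one, ENNReal.mul_div_cancel hN0 hN]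
  set S : V × V → ℝ≥0∞ := fun x => ∫⁻ z', P (z', x.2) * gE (1/2) (x.1 - z') with hS
  have hSm : Measurable S := by
    have : Measurable fun y : (V × V) × V => P (y.2, y.1.2) * gE (1/2) (y.1.1 - y.2) :=
      (hP.comp (measurable_snd.prodMk (measurable_snd.comp measurable_fst))).mul
        (hGm.comp ((measurable_fst.comp measurable_fst).sub measurable_snd))
    exact this.lintegral_prod_right'
  have hPz : ∀ ζ, Measurable fun z => P (z, ζ) := fun ζ => hP.comp measurable_prodMk_right
  have hGz : ∀ z : V, Measurable fun z' => gE (1/2) (z - z') := fun z =>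
    hGm.comp (measurable_const.sub measurable_id)
  have hS1 : ∀ x, S x ≤ 1 := fun x =>
    (lintegral_mono fun z' => mul_le_of_le_one_right zero_le (gE_le_one (by norm_num) _)).trans (hPint x.2)
  refine ⟨X, S, (hB.pow_const _).div_const _, hSm, ?_, ?_, ?_⟩
  · simp only [hX, div_eq_mul_inv]
    rw [lintegral_mul_const _ (hB.pow_const _), ← div_eq_mul_inv]
    exact ENNReal.div_le_of_le_mul (by simpa using hBN)
  · intro ζ
    simp only [hS]
    rw [lintegral_lintegral_swap]
    · calc ∫⁻ z', ∫⁻ z, P (z', ζ) * gE (1/2) (z - z') = ∫⁻ z', P (z', ζ) * I := by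
            refine lintegral_congr fun z' => ?_
            have hm : Measurable fun z => gE (1/2) (z - z') := hGm.comp (measurable_id.sub measurable_const)
            rw [lintegral_const_mul _ hm, lintegral_sub_right_eq_self (fun z => gE (1/2) z) z']
        _ = (∫⁻ z', P (z', ζ)) * I := lintegral_mul_const _ (hPz ζ)
        _ ≤ 1 * I := by gcongr; exact hPint ζ
        _ ≤ _ := by rw [one_mul]; exact le_max_left _ _
    · exact ((hP.comp (measurable_snd.prodMk measurable_const)).mul
        (hGm.comp (measurable_fst.sub measurable_snd))).aemeasurable
  · intro z ζ
    have key : ∫⁻ z', ∫⁻ ζ', ‖Vw 1 a z' ζ'‖ₑ * (gE (1/2) (z - z') * gE (1/2) (ζ - ζ')) ≤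
        I ^ (1 - invR p) * N * ∫⁻ η, gE (1/2) η * (X (ζ - η) ^ (invR q) * S (z, ζ - η) ^ α) := by
      have hm2 : Measurable fun p : V × V => ‖Vw 1 a p.1 p.2‖ₑ * (gE (1/2) (z - p.1) * gE (1/2) (ζ - p.2)) :=
        hAc.measurable.mul (((gE_measurable _).comp (measurable_const.sub measurable_fst)).mul
          ((gE_measurable _).comp (measurable_const.sub measurable_snd)))
      have hsw := lintegral_lintegral_swap (μ := (volume : Measure V)) (ν := (volume : Measure V)) (f := fun z' ζ' => ‖Vw 1 a z' ζ'‖ₑ * (gE (1/2) (z - z') * gE (1/2) (ζ - ζ')))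
        hm2.aemeasurable
      rw [hsw]
      have hin : ∀ᵐ ζ' : V, ∫⁻ z', ‖Vw 1 a z' ζ'‖ₑ * (gE (1/2) (z - z') * gE (1/2) (ζ - ζ')) ≤
          I ^ (1 - invR p) * N * (gE (1/2) (ζ - ζ') * (X ζ' ^ (invR q) * S (z, ζ') ^ α)) := by
        filter_upwards [hBfin, hBX] with ζ' hf hb
        have hb2 := hAB ζ' hf
        have hH := ENNReal.lintegral_mul_norm_pow_le (μ := (volume : Measure V))
          (f := fun z' => P (z', ζ') * gE (1/2) (z - z')) (g := fun z' => gE (1/2) (z - z'))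
          (p := invR p) (q := 1 - invR p) ((hPz ζ').mul (hGz z)).aemeasurable (hGz z).aemeasurable
          hp0 (by linarith) (by ring)
        rw [lintegral_sub_left_eq_self (fun z' => gE (1/2) z') z, ← hI] at hH
        calc ∫⁻ z', ‖Vw 1 a z' ζ'‖ₑ * (gE (1/2) (z - z') * gE (1/2) (ζ - ζ')) 
            ≤ ∫⁻ z', (B ζ' * gE (1/2) (ζ - ζ')) * ((P (z', ζ') * gE (1/2) (z - z')) ^ (invR p)
              * (gE (1/2) (z - z')) ^ (1 - invR p)) := by
              refine lintegral_mono_ae ?_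
              filter_upwards [hb2] with z' hz'
              rw [ENNReal.mul_rpow_of_nonneg _ _ hp0, mul_assoc (P _ ^ _),
                ← ENNReal.rpow_add_of_nonneg _ _ hp0 (by linarith), add_sub_cancel, ENNReal.rpow_one]
              calc _ ≤ (B ζ' * P (z', ζ') ^ invR p) * (gE (1/2) (z - z') * gE (1/2) (ζ - ζ')) := by
                    gcongr
                _ = _ := by simp only [mul_comm, mul_left_comm, mul_assoc]
          _ = (B ζ' * gE (1/2) (ζ - ζ')) * ∫⁻ z', ((P (z', ζ') * gE (1/2) (z - z')) ^ (invR p)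
              * (gE (1/2) (z - z')) ^ (1 - invR p)) := 
              lintegral_const_mul _ ((((hPz ζ').mul (hGz z)).pow_const _).mul ((hGz z).pow_const _))
          _ ≤ (N * X ζ' ^ (invR q) * gE (1/2) (ζ - ζ')) * (S (z, ζ') ^ invR p * I ^ (1 - invR p)) := by
              gcongr
          _ ≤ (N * X ζ' ^ (invR q) * gE (1/2) (ζ - ζ')) * (S (z, ζ') ^ α * I ^ (1 - invR p)) := by
              have := ENNReal.rpow_le_rpow_of_exponent_ge (hS1 (z, ζ')) h1
              exact mul_le_mul_right (mul_le_mul_left this _) _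
          _ = _ := by simp only [mul_comm, mul_left_comm, mul_assoc]
      refine (lintegral_mono_ae hin).trans (le_of_eq ?_)
      have hXm : Measurable X := (hB.pow_const _).div_const _
      have hm5 : Measurable fun ζ' => gE (1/2) (ζ - ζ') * (X ζ' ^ (invR q) * S (z, ζ') ^ α) :=
        (hGz ζ).mul ((hXm.pow_const _).mul ((hSm.comp measurable_prodMk_left).pow_const _))
      rw [lintegral_const_mul _ hm5]
      congr 1
      rw [← lintegral_sub_left_eq_self _ ζ]
      refine lintegral_congr fun η => ?_
      simp only [_root_.sub_sub_cancel]
    have hr := (repro ha z ζ).trans (mul_le_mul_right key (cF V 2))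
    have hr2 := (ENNReal.le_div_iff_mul_le (Or.inl hc2) (Or.inl (gE_lint two_pos))).2 hr
    refine hr2.trans ?_
    calc _ = (cF V 2 * I ^ (1 - invR p) / ∫⁻ t : V, gE 2 t) * N *
          ∫⁻ η, gE (1/2) η * (X (ζ - η) ^ (invR q) * S (z, ζ - η) ^ α) := by
          simp only [div_eq_mul_inv, mul_comm, mul_left_comm, mul_assoc]
      _ ≤ _ := by
        gcongr
        exact le_max_right _ _
end Sym

section Pair
variable {d : ℕ}

theorem pairE_inner (x ω y η : EuclideanSpace ℝ (Fin d)) :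
    (inner ℝ (pairE x ω) (pairE y η) : ℝ) = inner ℝ x y + inner ℝ ω η := by
  simp [pairE, PiLp.inner_apply, Fintype.sum_sum_type]

theorem pairE_sub (x ω y η : EuclideanSpace ℝ (Fin d)) :
    pairE x ω - pairE y η = pairE (x - y) (ω - η) := by
  ext i; rcases i with i | i <;> simp [pairE]

theorem pairE_neg (x ω : EuclideanSpace ℝ (Fin d)) :
    -pairE x ω = pairE (-x) (-ω) := by
  ext i; rcases i with i | i <;> simp [pairE]

theorem pairE_norm_sq (x ω : EuclideanSpace ℝ (Fin d)) :
    ‖pairE x ω‖ ^ 2 = ‖x‖ ^ 2 + ‖ω‖ ^ 2 := by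
  rw [← real_inner_self_eq_norm_sq, pairE_inner, real_inner_self_eq_norm_sq, real_inner_self_eq_norm_sq]

theorem pairE_gw (c : ℝ) (x ω : EuclideanSpace ℝ (Fin d)) :
    gw c (pairE x ω) = gw c x * gw c ω := by
  unfold gw; rw [← Real.exp_add, pairE_norm_sq]; congr 1; ring

theorem xpart_pairE (x ω : EuclideanSpace ℝ (Fin d)) : xpart (pairE x ω) = x := by
  ext i; simp [xpart, pairE]

theorem wpart_pairE (x ω : EuclideanSpace ℝ (Fin d)) : wpart (pairE x ω) = ω := by
  ext i; simp [wpart, pairE]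

theorem pairE_parts (z : EuclideanSpace ℝ (Fin d ⊕ Fin d)) : pairE (xpart z) (wpart z) = z := by
  ext i; rcases i with i | i <;> simp [pairE, xpart, wpart]

theorem xpart_continuous : Continuous (xpart : EuclideanSpace ℝ (Fin d ⊕ Fin d) → _) := by
  unfold xpart; fun_prop

theorem wpart_continuous : Continuous (wpart : EuclideanSpace ℝ (Fin d ⊕ Fin d) → _) := by
  unfold wpart; fun_prop

theorem pairE_continuous : Continuous fun p : EuclideanSpace ℝ (Fin d) × EuclideanSpace ℝ (Fin d) =>
    pairE p.1 p.2 := by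
  unfold pairE
  refine (PiLp.continuous_toLp 2 _).comp (continuous_pi fun i => ?_)
  rcases i with i | i <;> simp <;> fun_prop

theorem pairE_mp : MeasurePreserving
    (fun p : EuclideanSpace ℝ (Fin d) × EuclideanSpace ℝ (Fin d) => pairE p.1 p.2)
    (volume.prod volume) volume := by
  have h1 := volume_measurePreserving_sumPiEquivProdPi_symm (fun _ : Fin d ⊕ Fin d => ℝ)
  have h2 := EuclideanSpace.volume_preserving_symm_measurableEquiv_toLp (Fin d)
  have h3 := EuclideanSpace.volume_preserving_symm_measurableEquiv_toLp (Fin d ⊕ Fin d)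
  have h4 := h2.prod h2
  have := (h3.symm.comp h1).comp h4
  convert! this using 1

/-- pairing as a measurable equivalence -/
noncomputable def pairEquiv (d : ℕ) : EuclideanSpace ℝ (Fin d) × EuclideanSpace ℝ (Fin d) ≃ᵐ
    EuclideanSpace ℝ (Fin d ⊕ Fin d) where
  toFun p := pairE p.1 p.2
  invFun z := (xpart z, wpart z)
  left_inv p := by simp [xpart_pairE, wpart_pairE]
  right_inv z := pairE_parts z
  measurable_toFun := pairE_continuous.measurable
  measurable_invFun := xpart_continuous.measurable.prodMk wpart_continuous.measurable

theorem pairEquiv_mp : MeasurePreserving (pairEquiv d) (volume.prod volume) volume := pairE_mp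

theorem lint_pair {F : EuclideanSpace ℝ (Fin d ⊕ Fin d) → ℝ≥0∞} (hF : Measurable F) :
    ∫⁻ z, F z = ∫⁻ x, ∫⁻ ω, F (pairE x ω) := by
  rw [← pairE_mp.lintegral_comp hF, lintegral_prod]
  exact (hF.comp pairE_continuous.measurable).aemeasurable

theorem integrable_pair {F : EuclideanSpace ℝ (Fin d ⊕ Fin d) → ℂ} :
    Integrable F ↔ Integrable (fun p : EuclideanSpace ℝ (Fin d) × EuclideanSpace ℝ (Fin d) =>
      F (pairE p.1 p.2)) (volume.prod volume) :=
  (pairEquiv_mp.integrable_comp_emb (pairEquiv d).measurableEmbedding).symm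

theorem int_pair {F : EuclideanSpace ℝ (Fin d ⊕ Fin d) → ℂ} (hF : Integrable F) :
    ∫ z, F z = ∫ x, ∫ ω, F (pairE x ω) := by
  rw [← pairEquiv_mp.integral_comp (pairEquiv d).measurableEmbedding]
  rw [integrable_pair] at hF
  exact integral_prod _ hF
end Pair

section Dec
set_option linter.unusedSectionVars false
variable {V : Type*} [NormedAddCommGroup V] [InnerProductSpace ℝ V]
    [FiniteDimensional ℝ V] [MeasurableSpace V] [BorelSpace V]

theorem schwartz_good (f : 𝓢(V, ℂ)) : Good (f : V → ℂ) :=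
  ⟨f.continuous.measurable, f.integrable, _, fun x => f.norm_le_seminorm ℝ x⟩

theorem gw_one_eq (w : V) : (gw 1 w : ℂ) = ∫ ξ : V, ch (-(inner ℝ ξ w : ℝ)) * (gw 1 ξ : ℂ) := by
  rw [← fourier_ch, fourier_gw_one]

open FourierTransform in
theorem decouple {g f : V → ℂ} (hg : Integrable g) (hf : Integrable f) (α β x0 y0 : V) (κ : ℝ) :
    ‖∫ x, ∫ t, g x * f t * ch ((inner ℝ x α : ℝ) + (inner ℝ t β : ℝ) + κ) *
      (gw 1 ((5/4 : ℝ) • (x - x0) - (4/5 : ℝ) • (t - y0)) : ℂ)‖ₑ ≤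
    ∫⁻ ξ, gE 1 ξ * (‖𝓕 g ((5/4 : ℝ) • ξ - α)‖ₑ * ‖𝓕 f (-((4/5 : ℝ) • ξ) - β)‖ₑ) := by
  set φ : V × V → ℝ := fun p => (inner ℝ p.1 α : ℝ) + (inner ℝ p.2 β : ℝ) + κ with hφ
  set w : V × V → V := fun p => (5/4 : ℝ) • (p.1 - x0) - (4/5 : ℝ) • (p.2 - y0) with hw
  have hφc : Continuous φ := by fun_prop
  have hwc : Continuous w := by fun_prop
  have hgf : Integrable (fun p : V × V => g p.1 * f p.2) (volume.prod volume) := hg.mul_prod hf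
  have hchφ : Continuous fun p => ch (φ p) := ch_continuous.comp hφc
  have hgw : Continuous fun p => (gw 1 (w p) : ℂ) :=
    Complex.continuous_ofReal.comp ((gw_continuous 1).comp hwc)
  have i1 : Integrable (fun p : V × V => g p.1 * f p.2 * ch (φ p)) (volume.prod volume) :=
    hgf.mul_bdd (c := 1) hchφ.aestronglyMeasurable (Filter.Eventually.of_forall fun p => (norm_ch _).le)
  have i2 : Integrable (fun p : V × V => g p.1 * f p.2 * ch (φ p) * (gw 1 (w p) : ℂ)) (volume.prod volume) :=
    i1.mul_bdd (c := 1) hgw.aestronglyMeasurable (Filter.Eventually.of_forall fun p => by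
      rw [Complex.norm_real, Real.norm_of_nonneg (gw_pos 1 _).le]; exact gw_le_one zero_le_one _)
  have e1 := integral_prod _ i2
  have hG : Integrable (fun ξ : V => (gw 1 ξ : ℂ)) := (gw_integrable one_pos).ofReal
  have i3 : Integrable (fun q : (V × V) × V => (g q.1.1 * f q.1.2 * ch (φ q.1)) * (gw 1 q.2 : ℂ))
      ((volume.prod volume).prod volume) := i1.mul_prod hG
  have hch2 : Continuous fun q : (V × V) × V => ch (-(inner ℝ q.2 (w q.1) : ℝ)) :=
    ch_continuous.comp (by fun_prop)
  have i4 : Integrable (fun q : (V × V) × V => (g q.1.1 * f q.1.2 * ch (φ q.1)) * (gw 1 q.2 : ℂ) *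
      ch (-(inner ℝ q.2 (w q.1) : ℝ))) ((volume.prod volume).prod volume) :=
    i3.mul_bdd (c := 1) hch2.aestronglyMeasurable (Filter.Eventually.of_forall fun p => (norm_ch _).le)
  have e2 := integral_integral_swap (f := fun (p : V × V) (ξ : V) =>
    (g p.1 * f p.2 * ch (φ p)) * (gw 1 ξ : ℂ) * ch (-(inner ℝ ξ (w p) : ℝ))) i4
  have e3 : ∫ p : V × V, g p.1 * f p.2 * ch (φ p) * (gw 1 (w p) : ℂ) ∂(volume.prod volume) =
      ∫ p : V × V, ∫ ξ, (g p.1 * f p.2 * ch (φ p)) * (gw 1 ξ : ℂ) * ch (-(inner ℝ ξ (w p) : ℝ))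
        ∂volume ∂(volume.prod volume) := by
    refine integral_congr_ae (Filter.Eventually.of_forall fun p => ?_)
    simp only
    rw [gw_one_eq (w p), ← integral_const_mul]
    refine integral_congr_ae (Filter.Eventually.of_forall fun ξ => ?_)
    simp only
    rw [mul_assoc (g p.1 * f p.2 * ch (φ p)), mul_comm (ch (-(inner ℝ ξ (w p) : ℝ)))]
  have e4 : ∀ ξ : V, ‖∫ p : V × V, (g p.1 * f p.2 * ch (φ p)) * (gw 1 ξ : ℂ) * ch (-(inner ℝ ξ (w p) : ℝ))
      ∂(volume.prod volume)‖ₑ = gE 1 ξ * (‖𝓕 g ((5/4 : ℝ) • ξ - α)‖ₑ * ‖𝓕 f (-((4/5 : ℝ) • ξ) - β)‖ₑ) := by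
    intro ξ
    have hpm := integral_prod_mul (μ := (volume : Measure V)) (ν := (volume : Measure V))
      (fun x => ch (-(inner ℝ x ((5/4 : ℝ) • ξ - α) : ℝ)) * g x)
      (fun t => ch (-(inner ℝ t (-((4/5 : ℝ) • ξ) - β) : ℝ)) * f t)
    rw [← fourier_ch, ← fourier_ch] at hpm
    have : ∫ p : V × V, (g p.1 * f p.2 * ch (φ p)) * (gw 1 ξ : ℂ) * ch (-(inner ℝ ξ (w p) : ℝ))
      ∂(volume.prod volume) = ((gw 1 ξ : ℂ) * ch (κ + (5/4) * (inner ℝ ξ x0 : ℝ) - (4/5) * (inner ℝ ξ y0 : ℝ))) *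
        (𝓕 g ((5/4 : ℝ) • ξ - α) * 𝓕 f (-((4/5 : ℝ) • ξ) - β)) := by
      rw [← hpm, ← integral_const_mul]
      refine integral_congr_ae (Filter.Eventually.of_forall fun p => ?_)
      simp only
      have hc : ch (φ p) * ch (-(inner ℝ ξ (w p) : ℝ)) =
          ch (κ + (5/4) * (inner ℝ ξ x0 : ℝ) - (4/5) * (inner ℝ ξ y0 : ℝ)) *
          (ch (-(inner ℝ p.1 ((5/4 : ℝ) • ξ - α) : ℝ)) * ch (-(inner ℝ p.2 (-((4/5 : ℝ) • ξ) - β) : ℝ))) := by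
        rw [← ch_add, ← ch_add, ← ch_add]
        congr 1
        simp only [hφ, hw, inner_sub_right, inner_smul_right, inner_neg_right]
        rw [real_inner_comm p.1 ξ, real_inner_comm p.2 ξ]
        ring
      linear_combination (g p.1 * f p.2 * (gw 1 ξ : ℂ)) * hc
    rw [this, enorm_mul, enorm_mul, enorm_mul, enorm_ch, enorm_gw, mul_one]
  have e5 : ∫ x, ∫ t, g x * f t * ch ((inner ℝ x α : ℝ) + (inner ℝ t β : ℝ) + κ) *
      (gw 1 ((5/4 : ℝ) • (x - x0) - (4/5 : ℝ) • (t - y0)) : ℂ) =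
      ∫ ξ, ∫ p : V × V, (g p.1 * f p.2 * ch (φ p)) * (gw 1 ξ : ℂ) * ch (-(inner ℝ ξ (w p) : ℝ))
      ∂(volume.prod volume) := by
    rw [← e2, ← e3, e1]
  rw [e5]
  refine (enorm_integral_le_lintegral_enorm _).trans (le_of_eq ?_)
  exact lintegral_congr e4

theorem gw_split (u v : V) : gw 1 u * gw 1 (v - u) =
    gw (7/16) u * gw (9/25) v * gw 1 ((5/4 : ℝ) • u - (4/5 : ℝ) • v) := by
  unfold gw; rw [← Real.exp_add, ← Real.exp_add, ← Real.exp_add]; congr 1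
  have e : ‖u‖ ^ 2 + ‖v - u‖ ^ 2 = (7/16) * ‖u‖ ^ 2 + (9/25) * ‖v‖ ^ 2 +
      ‖(5/4 : ℝ) • u - (4/5 : ℝ) • v‖ ^ 2 := by
    rw [norm_sub_sq_real, norm_sub_sq_real, norm_smul, norm_smul, inner_smul_left, inner_smul_right,
      real_inner_comm]
    norm_num; ring
  linear_combination (-Real.pi) * e

open FourierTransform in
theorem inner_step {f : V → ℂ} (hf : Integrable f) (ω0 y : V) :
    ∫ ω, 𝓕 f ω * ((gw 1 (ω - ω0) : ℂ) * ch (inner ℝ ω y : ℝ)) =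
      ∫ t, f t * (ch (inner ℝ (y - t) ω0 : ℝ) * (gw 1 (t - y) : ℂ)) := by
  have hG : Integrable fun ω : V => (gw 1 (ω - ω0) : ℂ) * ch (inner ℝ ω y : ℝ) :=
    ((good_gw one_pos ω0).mul_ch (by fun_prop)).2.1
  rw [fourier_flip hf hG]
  refine integral_congr_ae (Filter.Eventually.of_forall fun t => ?_)
  simp only
  congr 1
  rw [fourier_ch, ← integral_add_right_eq_self _ ω0, gw_one_eq (t - y), ← integral_const_mul]
  refine integral_congr_ae (Filter.Eventually.of_forall fun x => ?_)
  simp only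
  rw [add_sub_cancel_right]
  have hc : ch (-(inner ℝ (x + ω0) t : ℝ)) * ch (inner ℝ (x + ω0) y : ℝ) =
      ch (inner ℝ (y - t) ω0 : ℝ) * ch (-(inner ℝ x (t - y) : ℝ)) := by
    rw [← ch_add, ← ch_add]
    congr 1
    simp only [inner_sub_right, inner_sub_left, inner_add_left]
    rw [real_inner_comm ω0 y, real_inner_comm ω0 t]
    ring
  linear_combination (gw 1 x : ℂ) * hc
end Dec

section HH
variable {d : ℕ}

open FourierTransform in
/-- the kernel against which the symbol is integrated -/
noncomputable def HH (f g : EuclideanSpace ℝ (Fin d) → ℂ) (z : EuclideanSpace ℝ (Fin d ⊕ Fin d)) : ℂ :=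
  g (xpart z) * 𝓕 f (wpart z) * ch (inner ℝ (xpart z) (wpart z) : ℝ)

open FourierTransform in
theorem HH_good (f : 𝓢(EuclideanSpace ℝ (Fin d), ℂ)) {g : EuclideanSpace ℝ (Fin d) → ℂ} (hg : Good g) :
    Good (HH (f : EuclideanSpace ℝ (Fin d) → ℂ) g) := by
  have hF : Good (𝓕 (f : EuclideanSpace ℝ (Fin d) → ℂ)) := by
    rw [← SchwartzMap.fourier_coe]; exact schwartz_good _
  have h0 : Good fun z : EuclideanSpace ℝ (Fin d ⊕ Fin d) => g (xpart z) * 𝓕 (f : EuclideanSpace ℝ (Fin d) → ℂ) (wpart z) := by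
    obtain ⟨M, hM⟩ := hg.2.2
    obtain ⟨L, hL⟩ := hF.2.2
    refine ⟨(hg.1.comp xpart_continuous.measurable).mul (hF.1.comp wpart_continuous.measurable), ?_,
      M * L, fun z => ?_⟩
    · rw [integrable_pair]
      simp only [xpart_pairE, wpart_pairE]
      exact hg.2.1.mul_prod hF.2.1
    · rw [norm_mul]
      exact mul_le_mul (hM _) (hL _) (norm_nonneg _) ((norm_nonneg _).trans (hM 0))
  exact h0.mul_ch (xpart_continuous.inner wpart_continuous)

open FourierTransform in
theorem HH_stft (f : 𝓢(EuclideanSpace ℝ (Fin d), ℂ)) {g : EuclideanSpace ℝ (Fin d) → ℂ} (hg : Good g)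
    (x0 ω0 ζ1 ζ2 : EuclideanSpace ℝ (Fin d)) :
    ‖Vw 1 (HH (f : EuclideanSpace ℝ (Fin d) → ℂ) g) (pairE x0 ω0) (-pairE ζ1 ζ2)‖ₑ ≤
      ∫⁻ ξ, gE 1 ξ * (‖Vw (7/16) g x0 ((5/4 : ℝ) • ξ - (ω0 + ζ1))‖ₑ *
        ‖Vw (9/25) (f : EuclideanSpace ℝ (Fin d) → ℂ) (x0 + ζ2) (ω0 - (4/5 : ℝ) • ξ)‖ₑ) := by
  have hf := schwartz_good f
  have h1 := ((HH_good f hg).mul_gw zero_le_one (pairE x0 ω0)).mul_ch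
    (φ := fun t => -(inner ℝ t (-pairE ζ1 ζ2) : ℝ)) (by fun_prop)
  have e0 : Vw 1 (HH (f : EuclideanSpace ℝ (Fin d) → ℂ) g) (pairE x0 ω0) (-pairE ζ1 ζ2) =
      ∫ x, ∫ t, (g x * (gw (7/16) (x - x0) : ℂ)) * (f t * (gw (9/25) (t - (x0 + ζ2)) : ℂ)) *
        ch ((inner ℝ x (ω0 + ζ1) : ℝ) + (inner ℝ t (-ω0) : ℝ) + (inner ℝ ζ2 ω0 : ℝ)) *
      (gw 1 ((5/4 : ℝ) • (x - x0) - (4/5 : ℝ) • (t - (x0 + ζ2))) : ℂ) := by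
    rw [Vw, fourier_ch]
    have : ∀ t, ch (-(inner ℝ t (-pairE ζ1 ζ2) : ℝ)) * (HH (f : EuclideanSpace ℝ (Fin d) → ℂ) g t *
      (gw 1 (t - pairE x0 ω0) : ℂ)) = HH (f : EuclideanSpace ℝ (Fin d) → ℂ) g t *
      (gw 1 (t - pairE x0 ω0) : ℂ) * ch (-(inner ℝ t (-pairE ζ1 ζ2) : ℝ)) := fun t => mul_comm _ _
    simp only [this]
    rw [int_pair h1.2.1]
    refine integral_congr_ae (Filter.Eventually.of_forall fun x => ?_)
    simp only
    have e1 : ∀ ω, HH (f : EuclideanSpace ℝ (Fin d) → ℂ) g (pairE x ω) *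
      (gw 1 (pairE x ω - pairE x0 ω0) : ℂ) * ch (-(inner ℝ (pairE x ω) (-pairE ζ1 ζ2) : ℝ)) =
      (g x * (gw 1 (x - x0) : ℂ) * ch (inner ℝ x ζ1 : ℝ)) *
        (𝓕 (f : EuclideanSpace ℝ (Fin d) → ℂ) ω * ((gw 1 (ω - ω0) : ℂ) * ch (inner ℝ ω (x + ζ2) : ℝ))) := by
      intro ω
      rw [HH, xpart_pairE, wpart_pairE, pairE_sub, pairE_gw]
      have hc : ch (inner ℝ x ω : ℝ) * ch (-(inner ℝ (pairE x ω) (-pairE ζ1 ζ2) : ℝ)) =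
          ch (inner ℝ x ζ1 : ℝ) * ch (inner ℝ ω (x + ζ2) : ℝ) := by
        rw [← ch_add, ← ch_add]
        congr 1
        rw [inner_neg_right, pairE_inner, inner_add_right, real_inner_comm ω x]
        ring
      push_cast
      linear_combination (g x * 𝓕 (f : EuclideanSpace ℝ (Fin d) → ℂ) ω * (gw 1 (x - x0) : ℂ) * (gw 1 (ω - ω0) : ℂ)) * hc
    simp only [e1]
    rw [integral_const_mul, inner_step hf.2.1, ← integral_const_mul]
    refine integral_congr_ae (Filter.Eventually.of_forall fun t => ?_)
    simp only
    have hs : ((gw 1 (x - x0) : ℝ) : ℂ) * (gw 1 (t - (x + ζ2)) : ℂ) =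
        (gw (7/16) (x - x0) : ℂ) * (gw (9/25) (t - (x0 + ζ2)) : ℂ) *
        (gw 1 ((5/4 : ℝ) • (x - x0) - (4/5 : ℝ) • (t - (x0 + ζ2))) : ℂ) := by
      have := gw_split (x - x0) (t - (x0 + ζ2))
      rw [show t - (x0 + ζ2) - (x - x0) = t - (x + ζ2) by abel] at this
      exact_mod_cast this
    have hc : ch (inner ℝ x ζ1 : ℝ) * ch (inner ℝ (x + ζ2 - t) ω0 : ℝ) =
        ch ((inner ℝ x (ω0 + ζ1) : ℝ) + (inner ℝ t (-ω0) : ℝ) + (inner ℝ ζ2 ω0 : ℝ)) := by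
      rw [← ch_add]
      congr 1
      simp only [inner_sub_left, inner_add_left, inner_add_right, inner_neg_right]
      ring
    rw [← hc]
    linear_combination (g x * f t * ch (inner ℝ x ζ1 : ℝ) * ch (inner ℝ (x + ζ2 - t) ω0 : ℝ)) * hs
  rw [e0]
  have := decouple (hg.mul_gw (c := 7/16) (by norm_num) x0).2.1 (hf.mul_gw (c := 9/25) (by norm_num) (x0 + ζ2)).2.1
    (ω0 + ζ1) (-ω0) x0 (x0 + ζ2) (inner ℝ ζ2 ω0 : ℝ)
  refine this.trans (le_of_eq ?_)
  refine lintegral_congr fun ξ => ?_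
  rw [Vw, Vw, show -((4/5 : ℝ) • ξ) - -ω0 = ω0 - (4/5 : ℝ) • ξ by abel]

theorem fTrans_eq (f : EuclideanSpace ℝ (Fin d) → ℂ) : fTrans f = FourierTransform.fourier f := by
  ext ω
  rw [fTrans, fourier_ch]
  refine integral_congr_ae (Filter.Eventually.of_forall fun t => ?_)
  simp only [ch]
  rw [mul_comm]
  congr 2
  push_cast; ring

theorem KN_eq (a : EuclideanSpace ℝ (Fin d ⊕ Fin d) → ℂ) (f : EuclideanSpace ℝ (Fin d) → ℂ)
    (x : EuclideanSpace ℝ (Fin d)) : KNop a f x =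
      ∫ ω, a (pairE x ω) * FourierTransform.fourier f ω * ch (inner ℝ x ω : ℝ) := by
  rw [KNop, fTrans_eq]
  refine integral_congr_ae (Filter.Eventually.of_forall fun t => ?_)
  simp only [ch]
  congr 2
  push_cast; ring

theorem KN_pair (a : 𝓢(EuclideanSpace ℝ (Fin d ⊕ Fin d), ℂ)) (f : 𝓢(EuclideanSpace ℝ (Fin d), ℂ))
    {g : EuclideanSpace ℝ (Fin d) → ℂ} (hg : Good g) :
    ∫ x, KNop a f x * g x = ∫ z, a z * HH (f : EuclideanSpace ℝ (Fin d) → ℂ) g z := by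
  have hH := HH_good f hg
  obtain ⟨M, hM⟩ := (schwartz_good a).2.2
  have hi : Integrable fun z => a z * HH (f : EuclideanSpace ℝ (Fin d) → ℂ) g z :=
    hH.2.1.bdd_mul a.continuous.aestronglyMeasurable (Filter.Eventually.of_forall hM)
  rw [int_pair hi]
  refine integral_congr_ae (Filter.Eventually.of_forall fun x => ?_)
  simp only
  rw [KN_eq, ← integral_mul_const]
  refine integral_congr_ae (Filter.Eventually.of_forall fun ω => ?_)
  simp only [HH, xpart_pairE, wpart_pairE]
  ring

theorem STFT_eq {ι : Type*} [Fintype ι] (F : EuclideanSpace ℝ ι → ℂ) (x ω : EuclideanSpace ℝ ι) :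
    STFT F x ω = Vw 1 F x ω := by
  rw [STFT, Vw, fourier_ch]
  refine integral_congr_ae (Filter.Eventually.of_forall fun t => ?_)
  have h : (starRingEnd ℂ) (gaussWin (t - x)) = (gw 1 (t - x) : ℂ) := by
    have : gaussWin (t - x) = (gw 1 (t - x) : ℂ) := by
      rw [gaussWin, gw]; push_cast; rw [mul_one]
    rw [this, Complex.conj_ofReal]
  simp only
  rw [h, mul_comm, real_inner_comm]
  congr 1
  rw [ch]; congr 1; push_cast; ring

theorem modNorm_eq {ι : Type*} [Fintype ι] (p q : ℝ≥0∞) (F : EuclideanSpace ℝ ι → ℂ) :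
    modNorm p q F = lqNorm volume q fun ω => lqNorm volume p fun x => ‖Vw 1 F x ω‖ₑ := by
  unfold modNorm
  simp only [STFT_eq]
  rfl
end HH

theorem holder4 {T : Type*} [MeasurableSpace T] (μ : Measure T) (A B C D : T → ℝ≥0∞)
    (hA : Measurable A) (hB : Measurable B) (hC : Measurable C) (hD : Measurable D)
    (θ β m1 m2 : ℝ) (hθ : 0 ≤ θ) (hβ : 0 ≤ β) (h1 : β ≤ m1) (h2 : β ≤ m2) (hm : m1 + m2 = 1 - θ)
    (M : ℝ≥0∞) (i1 : ∫⁻ t, A t * B t ∂μ ≤ M) (i2 : ∫⁻ t, C t * D t ∂μ ≤ M)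
    (i3 : ∫⁻ t, A t * C t ∂μ ≤ M) (i4 : ∫⁻ t, A t * D t ∂μ ≤ M) :
    ∫⁻ t, (A t ^ (1 - β) * B t ^ (θ + β)) * (C t ^ m1 * D t ^ m2) ∂μ ≤ M := by
  have key := ENNReal.lintegral_prod_norm_pow_le (μ := μ) (Finset.univ : Finset (Fin 4))
    (f := ![fun t => A t * B t, fun t => C t * D t, fun t => A t * C t, fun t => A t * D t])
    (p := ![θ + β, β, m1 - β, m2 - β])
    (by
      intro i _
      fin_cases i
      · exact (hA.mul hB).aemeasurable
      · exact (hC.mul hD).aemeasurable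
      · exact (hA.mul hC).aemeasurable
      · exact (hA.mul hD).aemeasurable)
    (by simp [Fin.sum_univ_four]; linarith)
    (by
      intro i _
      fin_cases i <;> simp <;> linarith)
  simp only [Fin.prod_univ_four] at key
  simp only [Matrix.cons_val_zero, Matrix.cons_val_one, Matrix.cons_val] at key
  have e : ∀ t, (A t ^ (1 - β) * B t ^ (θ + β)) * (C t ^ m1 * D t ^ m2)
      = (A t * B t) ^ (θ + β) * (C t * D t) ^ β * (A t * C t) ^ (m1 - β) * (A t * D t) ^ (m2 - β) := by
    intro t
    have p1 : 0 ≤ θ + β := by linarith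
    have p2 : 0 ≤ m1 - β := by linarith
    have p3 : 0 ≤ m2 - β := by linarith
    rw [ENNReal.mul_rpow_of_nonneg _ _ p1, ENNReal.mul_rpow_of_nonneg _ _ hβ,
      ENNReal.mul_rpow_of_nonneg _ _ p2, ENNReal.mul_rpow_of_nonneg _ _ p3]
    have e1 : (1 - β) = (θ + β) + (m1 - β) + (m2 - β) := by linarith
    have e2 : C t ^ m1 = C t ^ β * C t ^ (m1 - β) := by
      rw [← ENNReal.rpow_add_of_nonneg _ _ hβ p2]; congr 1; ring
    have e3 : D t ^ m2 = D t ^ β * D t ^ (m2 - β) := by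
      rw [← ENNReal.rpow_add_of_nonneg _ _ hβ p3]; congr 1; ring
    rw [e2, e3, e1, ENNReal.rpow_add_of_nonneg _ _ (by linarith) p3,
      ENNReal.rpow_add_of_nonneg _ _ p1 p2]
    ring
  simp_rw [e]
  refine key.trans ?_
  have p1 : 0 ≤ θ + β := by linarith
  have p2 : 0 ≤ m1 - β := by linarith
  have p3 : 0 ≤ m2 - β := by linarith
  calc _ ≤ M ^ (θ + β) * M ^ β * M ^ (m1 - β) * M ^ (m2 - β) := by gcongr
    _ = M := by
      rw [← ENNReal.rpow_add_of_nonneg _ _ p1 hβ, ← ENNReal.rpow_add_of_nonneg _ _ (by linarith) p2,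
        ← ENNReal.rpow_add_of_nonneg _ _ (by linarith) p3]
      have : θ + β + β + (m1 - β) + (m2 - β) = 1 := by linarith
      rw [this, ENNReal.rpow_one]

section HolderPair
variable {d : ℕ}


theorem holderPair (K : ℝ≥0∞) (hK : 1 ≤ K)
    (θ β m1 m2 : ℝ) (hθ : 0 ≤ θ) (hβ : 0 ≤ β) (h1 : β ≤ m1) (h2 : β ≤ m2) (hm : m1 + m2 = 1 - θ)
    (X : (EuclideanSpace ℝ (Fin d ⊕ Fin d)) → ℝ≥0∞) (S : (EuclideanSpace ℝ (Fin d ⊕ Fin d)) × (EuclideanSpace ℝ (Fin d ⊕ Fin d)) → ℝ≥0∞) (Z Y : (EuclideanSpace ℝ (Fin d)) → ℝ≥0∞) (R Q : (EuclideanSpace ℝ (Fin d)) × (EuclideanSpace ℝ (Fin d)) → ℝ≥0∞)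
    (mX : Measurable X) (mS : Measurable S) (mZ : Measurable Z) (mY : Measurable Y)
    (mR : Measurable R) (mQ : Measurable Q)
    (iX : ∫⁻ ζ, X ζ ≤ 1) (iS : ∀ ζ, ∫⁻ z, S (z, ζ) ≤ K) (iZ : ∫⁻ x, Z x ≤ K) (iY : ∫⁻ x, Y x ≤ K)
    (iR : ∀ x, ∫⁻ ω, R (x, ω) ≤ K) (iQ : ∀ x, ∫⁻ ω, Q (x, ω) ≤ K) (η : (EuclideanSpace ℝ (Fin d ⊕ Fin d))) (ξ1 ξ2 : (EuclideanSpace ℝ (Fin d))) :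
    ∫⁻ u : (EuclideanSpace ℝ (Fin d ⊕ Fin d)) × (EuclideanSpace ℝ (Fin d ⊕ Fin d)), (X (u.1 - η) ^ (1 - β) * S (u.2, u.1 - η) ^ (θ + β)) *
      ((Q (xpart u.2, ξ1 - (wpart u.2 + xpart u.1)) * Z (xpart u.2 + wpart u.1)) ^ m1 *
       (Y (xpart u.2) * R (xpart u.2 + wpart u.1, wpart u.2 - ξ2)) ^ m2) ∂(volume.prod volume)
      ≤ K ^ 4 := by
  have mx : Measurable (xpart : (EuclideanSpace ℝ (Fin d ⊕ Fin d)) → (EuclideanSpace ℝ (Fin d))) := xpart_continuous.measurable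
  have mw : Measurable (wpart : (EuclideanSpace ℝ (Fin d ⊕ Fin d)) → (EuclideanSpace ℝ (Fin d))) := wpart_continuous.measurable
  have x1 : Measurable fun u : (EuclideanSpace ℝ (Fin d ⊕ Fin d)) × (EuclideanSpace ℝ (Fin d ⊕ Fin d)) => xpart u.1 := mx.comp measurable_fst
  have x2 : Measurable fun u : (EuclideanSpace ℝ (Fin d ⊕ Fin d)) × (EuclideanSpace ℝ (Fin d ⊕ Fin d)) => xpart u.2 := mx.comp measurable_snd
  have w1 : Measurable fun u : (EuclideanSpace ℝ (Fin d ⊕ Fin d)) × (EuclideanSpace ℝ (Fin d ⊕ Fin d)) => wpart u.1 := mw.comp measurable_fst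
  have w2 : Measurable fun u : (EuclideanSpace ℝ (Fin d ⊕ Fin d)) × (EuclideanSpace ℝ (Fin d ⊕ Fin d)) => wpart u.2 := mw.comp measurable_snd
  have hA : Measurable fun u : (EuclideanSpace ℝ (Fin d ⊕ Fin d)) × (EuclideanSpace ℝ (Fin d ⊕ Fin d)) => X (u.1 - η) := mX.comp (measurable_fst.sub_const η)
  have hB : Measurable fun u : (EuclideanSpace ℝ (Fin d ⊕ Fin d)) × (EuclideanSpace ℝ (Fin d ⊕ Fin d)) => S (u.2, u.1 - η) :=
    mS.comp (measurable_snd.prodMk (measurable_fst.sub_const η))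
  have hC : Measurable fun u : (EuclideanSpace ℝ (Fin d ⊕ Fin d)) × (EuclideanSpace ℝ (Fin d ⊕ Fin d)) =>
      Q (xpart u.2, ξ1 - (wpart u.2 + xpart u.1)) * Z (xpart u.2 + wpart u.1) :=
    (mQ.comp (x2.prodMk (measurable_const.sub (w2.add x1)))).mul (mZ.comp (x2.add w1))
  have hD : Measurable fun u : (EuclideanSpace ℝ (Fin d ⊕ Fin d)) × (EuclideanSpace ℝ (Fin d ⊕ Fin d)) =>
      Y (xpart u.2) * R (xpart u.2 + wpart u.1, wpart u.2 - ξ2) :=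
    (mY.comp x2).mul (mR.comp ((x2.add w1).prodMk (w2.sub_const ξ2)))
  have tQ : ∀ (x b : (EuclideanSpace ℝ (Fin d))), ∫⁻ ω, Q (x, ξ1 - (ω + b)) ≤ K := by
    intro x b
    have := lintegral_sub_left_eq_self (μ := (volume : Measure (EuclideanSpace ℝ (Fin d)))) (fun ω => Q (x, ω)) (ξ1 - b)
    calc _ = ∫⁻ ω, Q (x, (ξ1 - b) - ω) := by congr 1; ext ω; congr 2; abel
      _ ≤ K := by rw [this]; exact iQ x
  have tQ' : ∀ (x b : (EuclideanSpace ℝ (Fin d))), ∫⁻ ω, Q (x, ξ1 - (b + ω)) ≤ K := by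
    intro x b
    simpa only [add_comm b] using tQ x b
  have tR : ∀ (x : (EuclideanSpace ℝ (Fin d))), ∫⁻ ω, R (x, ω - ξ2) ≤ K := by
    intro x
    rw [lintegral_sub_right_eq_self (μ := (volume : Measure (EuclideanSpace ℝ (Fin d)))) (fun ω => R (x, ω)) ξ2]
    exact iR x
  have tZ : ∀ b : (EuclideanSpace ℝ (Fin d)), ∫⁻ x, Z (x + b) ≤ K := by
    intro b; rw [lintegral_add_right_eq_self (fun x => Z x) b]; exact iZ
  have tZ' : ∀ b : (EuclideanSpace ℝ (Fin d)), ∫⁻ x, Z (b + x) ≤ K := by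
    intro b; rw [lintegral_add_left_eq_self (fun x => Z x) b]; exact iZ
  have tX : ∫⁻ ζ, X (ζ - η) ≤ 1 := by
    rw [lintegral_sub_right_eq_self (fun x => X x) η]; exact iX
  have gen : ∀ (G : (EuclideanSpace ℝ (Fin d ⊕ Fin d)) × (EuclideanSpace ℝ (Fin d ⊕ Fin d)) → ℝ≥0∞), Measurable G → (∀ ζ, ∫⁻ z, G (ζ, z) ≤ K ^ 4) →
      ∫⁻ u : (EuclideanSpace ℝ (Fin d ⊕ Fin d)) × (EuclideanSpace ℝ (Fin d ⊕ Fin d)), X (u.1 - η) * G u ∂(volume.prod volume) ≤ K ^ 4 := by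
    intro G mG hG
    have mAG : Measurable fun u : (EuclideanSpace ℝ (Fin d ⊕ Fin d)) × (EuclideanSpace ℝ (Fin d ⊕ Fin d)) => X (u.1 - η) * G u := hA.mul mG
    rw [lintegral_prod _ mAG.aemeasurable]
    calc _ ≤ ∫⁻ ζ, X (ζ - η) * K ^ 4 := by
          refine lintegral_mono fun ζ => ?_
          have mm : Measurable fun z => G (ζ, z) := (mG.comp (measurable_prodMk_left (x := ζ)) :)
          simp only
          rw [lintegral_const_mul _ mm]
          gcongr; exact hG ζ
      _ = (∫⁻ ζ, X (ζ - η)) * K ^ 4 := by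
          have mm : Measurable fun ζ => X (ζ - η) := mX.comp (measurable_id.sub_const η)
          rw [lintegral_mul_const _ mm]
      _ ≤ 1 * K ^ 4 := by gcongr
      _ = K ^ 4 := one_mul _
  have k1 : K ≤ K ^ 4 := le_self_pow₀ hK (by norm_num)
  have k2 : K ^ 2 ≤ K ^ 4 := pow_le_pow_right₀ hK (by norm_num)
  refine holder4 _ _ _ _ _ hA hB hC hD θ β m1 m2 hθ hβ h1 h2 hm _ ?_ ?_ ?_ ?_
  · exact gen _ hB fun ζ => (iS (ζ - η)).trans k1
  · have hCD : Measurable fun z : (EuclideanSpace ℝ (Fin d ⊕ Fin d)) × (EuclideanSpace ℝ (Fin d ⊕ Fin d)) => (Q (xpart z.2, ξ1 - (wpart z.2 + xpart z.1)) * Z (xpart z.2 + wpart z.1)) *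
      (Y (xpart z.2) * R (xpart z.2 + wpart z.1, wpart z.2 - ξ2)) := hC.mul hD
    rw [lintegral_prod_symm _ hCD.aemeasurable]
    have mm0 : Measurable fun z : (EuclideanSpace ℝ (Fin d ⊕ Fin d)) => ∫⁻ ζ : (EuclideanSpace ℝ (Fin d ⊕ Fin d)), (Q (xpart z, ξ1 - (wpart z + xpart ζ)) * Z (xpart z + wpart ζ)) *
      (Y (xpart z) * R (xpart z + wpart ζ, wpart z - ξ2)) := (hC.mul hD).lintegral_prod_left'
    have s1 : ∀ z : (EuclideanSpace ℝ (Fin d ⊕ Fin d)), ∫⁻ ζ : (EuclideanSpace ℝ (Fin d ⊕ Fin d)), (Q (xpart z, ξ1 - (wpart z + xpart ζ)) * Z (xpart z + wpart ζ)) *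
      (Y (xpart z) * R (xpart z + wpart ζ, wpart z - ξ2)) ≤
        ∫⁻ ζ2 : (EuclideanSpace ℝ (Fin d)), K * (Z (xpart z + ζ2) * (Y (xpart z) * R (xpart z + ζ2, wpart z - ξ2))) := by
      intro z
      have m0 : Measurable fun ζ : (EuclideanSpace ℝ (Fin d ⊕ Fin d)) => (Q (xpart z, ξ1 - (wpart z + xpart ζ)) * Z (xpart z + wpart ζ)) *
        (Y (xpart z) * R (xpart z + wpart ζ, wpart z - ξ2)) :=
        ((hC.mul hD).comp (measurable_prodMk_right (y := z)) :)
      rw [lint_pair m0, lintegral_lintegral_swap]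
      · refine lintegral_mono fun ζ2 => ?_
        simp only [xpart_pairE, wpart_pairE]
        have m1 : Measurable fun ζ1 : (EuclideanSpace ℝ (Fin d)) => Q (xpart z, ξ1 - (wpart z + ζ1)) := by fun_prop
        simp_rw [mul_assoc]
        rw [lintegral_mul_const _ m1]
        gcongr
        exact tQ' _ _
      · exact (m0.comp pairE_continuous.measurable).aemeasurable
    have ms2 : Measurable fun z : (EuclideanSpace ℝ (Fin d ⊕ Fin d)) => ∫⁻ ζ2 : (EuclideanSpace ℝ (Fin d)), K * (Z (xpart z + ζ2) * (Y (xpart z) * R (xpart z + ζ2, wpart z - ξ2))) := by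
      apply Measurable.lintegral_prod_right'
        (f := fun p : (EuclideanSpace ℝ (Fin d ⊕ Fin d)) × (EuclideanSpace ℝ (Fin d)) => K * (Z (xpart p.1 + p.2) * (Y (xpart p.1) * R (xpart p.1 + p.2, wpart p.1 - ξ2))))
      fun_prop
    calc _ ≤ ∫⁻ z : (EuclideanSpace ℝ (Fin d ⊕ Fin d)), ∫⁻ ζ2 : (EuclideanSpace ℝ (Fin d)), K * (Z (xpart z + ζ2) * (Y (xpart z) * R (xpart z + ζ2, wpart z - ξ2))) :=
          lintegral_mono s1
      _ = ∫⁻ x : (EuclideanSpace ℝ (Fin d)), ∫⁻ ω : (EuclideanSpace ℝ (Fin d)), ∫⁻ ζ2 : (EuclideanSpace ℝ (Fin d)), K * (Z (x + ζ2) * (Y x * R (x + ζ2, ω - ξ2))) := by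
          rw [lint_pair ms2]; simp only [xpart_pairE, wpart_pairE]
      _ ≤ ∫⁻ x : (EuclideanSpace ℝ (Fin d)), K ^ 3 * Y x := by
          refine lintegral_mono fun x => ?_
          simp only
          rw [lintegral_lintegral_swap]
          · calc _ ≤ ∫⁻ ζ2 : (EuclideanSpace ℝ (Fin d)), (K ^ 2 * Y x) * Z (x + ζ2) := by
                  refine lintegral_mono fun ζ2 => ?_
                  have m1 : Measurable fun ω : (EuclideanSpace ℝ (Fin d)) => R (x + ζ2, ω - ξ2) := by fun_prop
                  simp only
                  have : ∀ ω, K * (Z (x + ζ2) * (Y x * R (x + ζ2, ω - ξ2)))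
                    = (K * (Z (x + ζ2) * Y x)) * R (x + ζ2, ω - ξ2) := fun ω => by ring
                  simp_rw [this]
                  rw [lintegral_const_mul _ m1]
                  calc _ ≤ K * (Z (x + ζ2) * Y x) * K := by gcongr; exact tR _
                    _ = _ := by ring
              _ = (K ^ 2 * Y x) * ∫⁻ ζ2 : (EuclideanSpace ℝ (Fin d)), Z (x + ζ2) := by
                  have m1 : Measurable fun ζ2 : (EuclideanSpace ℝ (Fin d)) => Z (x + ζ2) := by fun_prop
                  rw [lintegral_const_mul _ m1]
              _ ≤ (K ^ 2 * Y x) * K := by gcongr; exact tZ' x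
              _ = K ^ 3 * Y x := by ring
          · fun_prop
      _ = K ^ 3 * ∫⁻ x, Y x := lintegral_const_mul _ mY
      _ ≤ K ^ 3 * K := by gcongr
      _ = K ^ 4 := by ring
  · refine gen _ hC fun ζ => ?_
    have m0 : Measurable fun z : (EuclideanSpace ℝ (Fin d ⊕ Fin d)) => Q (xpart z, ξ1 - (wpart z + xpart ζ)) * Z (xpart z + wpart ζ) :=
      (hC.comp (measurable_prodMk_left (x := ζ)) :)
    simp only
    rw [lint_pair m0]
    simp only [xpart_pairE, wpart_pairE]
    calc _ ≤ ∫⁻ x : (EuclideanSpace ℝ (Fin d)), K * Z (x + wpart ζ) := by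
          refine lintegral_mono fun x => ?_
          have m1 : Measurable fun ω : (EuclideanSpace ℝ (Fin d)) => Q (x, ξ1 - (ω + xpart ζ)) := by fun_prop
          simp only
          rw [lintegral_mul_const _ m1]
          gcongr
          exact tQ _ _
      _ = K * ∫⁻ x : (EuclideanSpace ℝ (Fin d)), Z (x + wpart ζ) := by
          have m1 : Measurable fun x : (EuclideanSpace ℝ (Fin d)) => Z (x + wpart ζ) := by fun_prop
          rw [lintegral_const_mul _ m1]
      _ ≤ K * K := by gcongr; exact tZ _
      _ = K ^ 2 := by ring
      _ ≤ _ := k2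
  · refine gen _ hD fun ζ => ?_
    have m0 : Measurable fun z : (EuclideanSpace ℝ (Fin d ⊕ Fin d)) => Y (xpart z) * R (xpart z + wpart ζ, wpart z - ξ2) :=
      (hD.comp (measurable_prodMk_left (x := ζ)) :)
    simp only
    rw [lint_pair m0]
    simp only [xpart_pairE, wpart_pairE]
    calc _ ≤ ∫⁻ x : (EuclideanSpace ℝ (Fin d)), Y x * K := by
          refine lintegral_mono fun x => ?_
          have m1 : Measurable fun ω : (EuclideanSpace ℝ (Fin d)) => R (x + wpart ζ, ω - ξ2) := by fun_prop
          simp only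
          rw [lintegral_const_mul _ m1]
          gcongr
          exact tR _
      _ = (∫⁻ x : (EuclideanSpace ℝ (Fin d)), Y x) * K := by
          rw [lintegral_mul_const _ mY]
      _ ≤ K * K := by gcongr
      _ = K ^ 2 := by ring
      _ ≤ _ := k2

end HolderPair

theorem invR_dualExp {r : ℝ≥0∞} (hr : 1 ≤ r) : invR (dualExp r) = 1 - invR r := by
  unfold dualExp
  split_ifs with h1 h2
  · subst h1; simp [invR]
  · subst h2; simp [invR]
  · have h3 := one_le_toReal' hr h2
    have h4 : r.toReal ≠ 1 := by
      intro h
      rw [ENNReal.toReal_eq_one_iff] at h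
      exact h1 h
    have h5 : 0 < r.toReal - 1 := by
      rcases lt_or_eq_of_le h3 with h | h
      · linarith
      · exact absurd h.symm h4
    rw [invR_of_ne_top, invR_of_ne_top, ENNReal.toReal_ofReal (by positivity)]
    have h6 : 0 < r.toReal := by linarith
    field_simp

theorem one_le_dualExp {r : ℝ≥0∞} (hr : 1 ≤ r) : 1 ≤ dualExp r := by
  unfold dualExp
  split_ifs with h1 h2
  · simp
  · simp
  · have h3 := one_le_toReal' hr h2
    have h4 : r.toReal ≠ 1 := by
      intro h
      rw [ENNReal.toReal_eq_one_iff] at h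
      exact h1 h
    have h5 : 0 < r.toReal - 1 := by
      rcases lt_or_eq_of_le h3 with h | h
      · linarith
      · exact absurd h.symm h4
    rw [ENNReal.one_le_ofReal, le_div_iff₀ h5]
    linarith

theorem invR_anti {q r : ℝ≥0∞} (hq : 1 ≤ q) (h : q ≤ r) : invR r ≤ invR q := by
  refine ENNReal.toReal_mono ?_ (ENNReal.inv_le_inv.2 h)
  have := ENNReal.inv_le_one.2 hq
  exact ne_top_of_le_ne_top (by simp) this

section Combine
variable {d : ℕ}


theorem pairing_bound (p q r : ℝ≥0∞)
    (hp : 1 ≤ p) (hq : 1 ≤ q) (hr : 1 ≤ r)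
    (h1 : |invR r - 1 / 2| + invR (dualExp q) ≤ invR p)
    (h2 : q ≤ min r (dualExp r)) :
    ∃ K : ℝ≥0∞, K ≠ ∞ ∧ ∀ (a : 𝓢((EuclideanSpace ℝ (Fin d ⊕ Fin d)), ℂ)) (f : 𝓢((EuclideanSpace ℝ (Fin d)), ℂ)) (g : (EuclideanSpace ℝ (Fin d)) → ℂ), Good g →
      modNorm p q (a : (EuclideanSpace ℝ (Fin d ⊕ Fin d)) → ℂ) ≠ ∞ →
      ‖∫ x, KNop a f x * g x‖ₑ ≤ K * modNorm p q (a : (EuclideanSpace ℝ (Fin d ⊕ Fin d)) → ℂ) * eLpNorm (f : (EuclideanSpace ℝ (Fin d)) → ℂ) r volume *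
        eLpNorm g (dualExp r) volume := by
  have hd := invR_dualExp hr
  have hdq := invR_dualExp hq
  have hr' := one_le_dualExp hr
  have a1 : invR r ≤ invR q := invR_anti hq (h2.trans (min_le_left _ _))
  have a2 : 1 - invR r ≤ invR q := hd ▸ invR_anti hq (h2.trans (min_le_right _ _))
  have a3 : invR q ≤ 1 := by simpa [invR] using invR_anti le_rfl hq
  have hqt : q ≠ ∞ := by
    rintro rfl
    have a4 : invR ∞ = 0 := by simp [invR]
    linarith
  set θ := |invR r - 1 / 2| with hθd
  have hθ : 0 ≤ θ := abs_nonneg _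
  set β := 1 - invR q with hβd
  have hβ : 0 ≤ β := by linarith
  rw [hdq] at h1
  set m1 := min (1/2) (invR r) with hm1
  set m2 := min (1/2) (1 - invR r) with hm2
  have b1 : β ≤ m1 := le_min (by linarith) (by linarith)
  have b2 : β ≤ m2 := le_min (by linarith) (by linarith)
  have n1 : 0 ≤ m1 := hβ.trans b1
  have n2 : 0 ≤ m2 := hβ.trans b2
  have hm : m1 + m2 = 1 - θ := by
    rcases le_total (invR r) (1/2) with h | h
    · rw [hm1, hm2, hθd, min_eq_right h, min_eq_left (by linarith), abs_of_nonpos (by linarith)]; ring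
    · rw [hm1, hm2, hθd, min_eq_left h, min_eq_right (by linarith), abs_of_nonneg (by linarith)]; ring
  obtain ⟨Ka, hKa, HA⟩ := symbolBound (V := (EuclideanSpace ℝ (Fin d ⊕ Fin d))) p q hp hq hqt (θ + β) (by linarith) h1
  obtain ⟨Kf, hKf, HF⟩ := windowBound (V := (EuclideanSpace ℝ (Fin d))) (9/25) r (by norm_num) hr
  obtain ⟨Kg, hKg, HG⟩ := windowBound (V := (EuclideanSpace ℝ (Fin d))) (7/16) (dualExp r) (by norm_num) hr'
  rw [hd] at HG
  rw [_root_.sub_sub_cancel] at HG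
  set K := max 1 (max Ka (max Kf Kg)) with hKd
  have hKt : K ≠ ∞ := by simp [hKd, hKa, hKf, hKg]
  have kK1 : 1 ≤ K := le_max_left _ _
  have kKa : Ka ≤ K := (le_max_left _ _).trans (le_max_right _ _)
  have kKf : Kf ≤ K := (le_max_left _ _).trans ((le_max_right _ _).trans (le_max_right _ _))
  have kKg : Kg ≤ K := (le_max_right _ _).trans ((le_max_right _ _).trans (le_max_right _ _))
  set G2 := ∫⁻ t : (EuclideanSpace ℝ (Fin d ⊕ Fin d)), gE 2 t with hG2
  set I1 := ∫⁻ t : (EuclideanSpace ℝ (Fin d ⊕ Fin d)), gE (1/2) t with hI1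
  set I2 := ∫⁻ t : (EuclideanSpace ℝ (Fin d)), gE 1 t with hI2
  have hG20 : G2 ≠ 0 := gE_lint_ne_zero 2
  have hG2t : G2 ≠ ∞ := gE_lint (by norm_num)
  have hI1t : I1 ≠ ∞ := gE_lint (by norm_num)
  have hI2t : I2 ≠ ∞ := gE_lint (by norm_num)
  refine ⟨Ka * Kf * Kg * (I1 * I2 * K ^ 4) * G2⁻¹, by finiteness, fun a f g hg hN => ?_⟩
  rw [modNorm_eq] at hN ⊢
  have hf := schwartz_good f
  obtain ⟨X, S, mX, mS, iX, iS, bA⟩ := HA a (schwartz_good a) hN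
  obtain ⟨Z, R, mZ, mR, iZ, iR, bF⟩ := HF f hf
  obtain ⟨Y, Q, mY, mQ, iY, iQ, bG⟩ := HG g hg
  set N := lqNorm volume q fun ω => lqNorm volume p fun x : (EuclideanSpace ℝ (Fin d ⊕ Fin d)) => ‖Vw 1 (a : (EuclideanSpace ℝ (Fin d ⊕ Fin d)) → ℂ) x ω‖ₑ with hNd
  set nf := eLpNorm (f : (EuclideanSpace ℝ (Fin d)) → ℂ) r volume with hnf
  set ng := eLpNorm g (dualExp r) volume with hng
  rw [KN_pair a f hg]
  have L := lemma1 (schwartz_good a) (HH_good f hg)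
  have mx : Measurable (xpart : (EuclideanSpace ℝ (Fin d ⊕ Fin d)) → (EuclideanSpace ℝ (Fin d))) := xpart_continuous.measurable
  have mw : Measurable (wpart : (EuclideanSpace ℝ (Fin d ⊕ Fin d)) → (EuclideanSpace ℝ (Fin d))) := wpart_continuous.measurable
  let T : (EuclideanSpace ℝ (Fin d ⊕ Fin d)) × (EuclideanSpace ℝ (Fin d ⊕ Fin d)) → (EuclideanSpace ℝ (Fin d ⊕ Fin d)) × (EuclideanSpace ℝ (Fin d)) → ℝ≥0∞ := fun u w => (X (u.1 - w.1) ^ (1 - β) * S (u.2, u.1 - w.1) ^ (θ + β)) *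
      ((Q (xpart u.2, (5/4 : ℝ) • w.2 - (wpart u.2 + xpart u.1)) * Z (xpart u.2 + wpart u.1)) ^ m1 *
       (Y (xpart u.2) * R (xpart u.2 + wpart u.1, wpart u.2 - (4/5 : ℝ) • w.2)) ^ m2)
  have mT : Measurable (Function.uncurry T) := by
    simp only [Function.uncurry_def, T]
    fun_prop
  have mg1 : Measurable (gE (1/2) : (EuclideanSpace ℝ (Fin d ⊕ Fin d)) → ℝ≥0∞) := gE_measurable _
  have mg2 : Measurable (gE 1 : (EuclideanSpace ℝ (Fin d)) → ℝ≥0∞) := gE_measurable _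
  have mGT : Measurable (Function.uncurry fun u w => gE (1/2) w.1 * gE 1 w.2 * T u w) := by
    have : Measurable fun x : ((EuclideanSpace ℝ (Fin d ⊕ Fin d)) × (EuclideanSpace ℝ (Fin d ⊕ Fin d))) × ((EuclideanSpace ℝ (Fin d ⊕ Fin d)) × (EuclideanSpace ℝ (Fin d))) => gE (1/2) x.2.1 * gE 1 x.2.2 := by fun_prop
    exact this.mul mT
  have pt : ∀ u : (EuclideanSpace ℝ (Fin d ⊕ Fin d)) × (EuclideanSpace ℝ (Fin d ⊕ Fin d)), ‖Vw 1 (a : (EuclideanSpace ℝ (Fin d ⊕ Fin d)) → ℂ) u.2 u.1‖ₑ * ‖Vw 1 (HH (f : (EuclideanSpace ℝ (Fin d)) → ℂ) g) u.2 (-u.1)‖ₑ ≤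
      (Ka * Kf * Kg * N * nf * ng) * ∫⁻ w, gE (1/2) w.1 * gE 1 w.2 * T u w ∂(volume.prod volume) := by
    intro u
    have e1 := HH_stft f hg (xpart u.2) (wpart u.2) (xpart u.1) (wpart u.1)
    rw [pairE_parts, pairE_parts] at e1
    have mB : Measurable fun ξ : (EuclideanSpace ℝ (Fin d)) => gE 1 ξ * ((Q (xpart u.2, (5/4 : ℝ) • ξ - (wpart u.2 + xpart u.1)) * Z (xpart u.2 + wpart u.1)) ^ m1 *
       (Y (xpart u.2) * R (xpart u.2 + wpart u.1, wpart u.2 - (4/5 : ℝ) • ξ)) ^ m2) := by fun_prop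
    have mA : Measurable fun η : (EuclideanSpace ℝ (Fin d ⊕ Fin d)) => gE (1/2) η * (X (u.1 - η) ^ (1 - β) * S (u.2, u.1 - η) ^ (θ + β)) := by
      fun_prop
    have e2 : ‖Vw 1 (HH (f : (EuclideanSpace ℝ (Fin d)) → ℂ) g) u.2 (-u.1)‖ₑ ≤ (Kf * Kg * nf * ng) * ∫⁻ ξ : (EuclideanSpace ℝ (Fin d)), gE 1 ξ * ((Q (xpart u.2, (5/4 : ℝ) • ξ - (wpart u.2 + xpart u.1)) * Z (xpart u.2 + wpart u.1)) ^ m1 *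
       (Y (xpart u.2) * R (xpart u.2 + wpart u.1, wpart u.2 - (4/5 : ℝ) • ξ)) ^ m2) := by
      rw [← lintegral_const_mul _ mB]
      refine e1.trans (lintegral_mono fun ξ => ?_)
      refine (mul_le_mul_right (mul_le_mul' (bG _ _) (bF _ _)) _).trans (le_of_eq ?_)
      simp only [ENNReal.mul_rpow_of_nonneg _ _ n1, ENNReal.mul_rpow_of_nonneg _ _ n2]
      ring
    have e3 := bA u.2 u.1
    have hq1 : invR q = 1 - β := by rw [hβd]; ring
    rw [hq1] at e3
    refine (mul_le_mul' e3 e2).trans (le_of_eq ?_)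
    have e4 := lintegral_prod_mul (μ := (volume : Measure (EuclideanSpace ℝ (Fin d ⊕ Fin d)))) (ν := (volume : Measure (EuclideanSpace ℝ (Fin d)))) mA.aemeasurable mB.aemeasurable
    have e5 : ∫⁻ w, gE (1/2) w.1 * gE 1 w.2 * T u w ∂((volume : Measure (EuclideanSpace ℝ (Fin d ⊕ Fin d))).prod (volume : Measure (EuclideanSpace ℝ (Fin d)))) = _ :=
      (lintegral_congr fun w => by simp only [T]; ring).trans e4
    rw [e5]
    ring
  have mV : Measurable fun u : (EuclideanSpace ℝ (Fin d ⊕ Fin d)) × (EuclideanSpace ℝ (Fin d ⊕ Fin d)) => ‖Vw 1 (a : (EuclideanSpace ℝ (Fin d ⊕ Fin d)) → ℂ) u.2 u.1‖ₑ * ‖Vw 1 (HH (f : (EuclideanSpace ℝ (Fin d)) → ℂ) g) u.2 (-u.1)‖ₑ := by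
    have v1 := (Vw_measurable (schwartz_good a) (zero_le_one' ℝ)).comp (measurable_swap (α := (EuclideanSpace ℝ (Fin d ⊕ Fin d))) (β := (EuclideanSpace ℝ (Fin d ⊕ Fin d))))
    have v2 := (Vw_measurable (HH_good f hg) (zero_le_one' ℝ)).comp
      (measurable_snd.prodMk measurable_fst.neg : Measurable fun u : (EuclideanSpace ℝ (Fin d ⊕ Fin d)) × (EuclideanSpace ℝ (Fin d ⊕ Fin d)) => (u.2, -u.1))
    exact v1.mul v2
  have mGT' : Measurable fun u : (EuclideanSpace ℝ (Fin d ⊕ Fin d)) × (EuclideanSpace ℝ (Fin d ⊕ Fin d)) => ∫⁻ w, gE (1/2) w.1 * gE 1 w.2 * T u w ∂((volume : Measure (EuclideanSpace ℝ (Fin d ⊕ Fin d))).prod (volume : Measure (EuclideanSpace ℝ (Fin d)))) :=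
    mGT.lintegral_prod_right
  have hp0 := fun w : (EuclideanSpace ℝ (Fin d ⊕ Fin d)) × (EuclideanSpace ℝ (Fin d)) => holderPair K kK1 θ β m1 m2 hθ hβ b1 b2 hm X S Z Y R Q mX mS mZ mY mR mQ iX
      (fun ζ => (iS ζ).trans kKa) (iZ.trans kKf) (iY.trans kKg) (fun x => (iR x).trans kKf)
      (fun x => (iQ x).trans kKg) w.1 ((5/4 : ℝ) • w.2) ((4/5 : ℝ) • w.2)
  have fin : ‖∫ z, a z * HH (f : (EuclideanSpace ℝ (Fin d)) → ℂ) g z‖ₑ * G2 ≤ (Ka * Kf * Kg * N * nf * ng) * (I1 * I2 * K ^ 4) := by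
    refine L.trans ?_
    rw [← lintegral_prod_symm _ mV.aemeasurable]
    refine (lintegral_mono pt).trans ?_
    rw [lintegral_const_mul _ mGT']
    refine mul_le_mul_right ?_ _
    rw [lintegral_lintegral_swap mGT.aemeasurable]
    calc _ ≤ ∫⁻ w, gE (1/2) w.1 * gE 1 w.2 * K ^ 4 ∂((volume : Measure (EuclideanSpace ℝ (Fin d ⊕ Fin d))).prod (volume : Measure (EuclideanSpace ℝ (Fin d)))) := by
          refine lintegral_mono fun w => ?_
          have mm : Measurable fun u => T u w := (mT.comp (measurable_prodMk_right (y := w)) :)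
          simp only
          rw [lintegral_const_mul _ mm]
          exact mul_le_mul_right (hp0 w) _
      _ = I1 * I2 * K ^ 4 := by
          rw [lintegral_mul_const _ (by fun_prop), lintegral_prod_mul mg1.aemeasurable mg2.aemeasurable]
  calc ‖∫ z, a z * HH (f : (EuclideanSpace ℝ (Fin d)) → ℂ) g z‖ₑ = ‖∫ z, a z * HH (f : (EuclideanSpace ℝ (Fin d)) → ℂ) g z‖ₑ * G2 * G2⁻¹ := by
        rw [mul_assoc, ENNReal.mul_inv_cancel hG20 hG2t, mul_one]
    _ ≤ (Ka * Kf * Kg * N * nf * ng) * (I1 * I2 * K ^ 4) * G2⁻¹ := mul_le_mul_left fin _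
    _ = _ := by ring

end Combine

section Dual
set_option linter.unusedSectionVars false
variable {E0 : Type*} [NormedAddCommGroup E0] [InnerProductSpace ℝ E0] [FiniteDimensional ℝ E0]
  [MeasurableSpace E0] [BorelSpace E0]

/-- dual test function -/
noncomputable def tst (h : E0 → ℂ) (s : ℝ) (A : Set E0) : E0 → ℂ :=
  A.indicator fun x => (starRingEnd ℂ) (h x) * ((‖h x‖ ^ (s - 2) : ℝ) : ℂ)

theorem tst_norm_le {h : E0 → ℂ} {s : ℝ} (A : Set E0) (x : E0) :
    ‖tst h s A x‖ ≤ A.indicator (fun x => ‖h x‖ ^ (s - 1)) x := by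
  unfold tst
  by_cases hx : x ∈ A
  · simp only [Set.indicator_of_mem hx, norm_mul, RCLike.norm_conj]
    rw [Complex.norm_of_nonneg (by positivity)]
    rcases eq_or_ne (‖h x‖) 0 with h0 | h0
    · rw [h0, zero_mul]; positivity
    · have : 0 < ‖h x‖ := lt_of_le_of_ne (norm_nonneg _) h0.symm
      rw [mul_comm, ← Real.rpow_add_one h0]
      apply le_of_eq; congr 1; ring
  · simp [Set.indicator_of_notMem hx]

theorem tst_mul {h : E0 → ℂ} {s : ℝ} (hs : 1 ≤ s) (A : Set E0) (x : E0) :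
    h x * tst h s A x = ((A.indicator (fun x => ‖h x‖ ^ s) x : ℝ) : ℂ) := by
  unfold tst
  by_cases hx : x ∈ A
  · simp only [Set.indicator_of_mem hx]
    rw [← mul_assoc, Complex.mul_conj, Complex.normSq_eq_norm_sq, ← Complex.ofReal_mul]
    congr 1
    rcases eq_or_ne (‖h x‖) 0 with h0 | h0
    · rw [h0, Real.zero_rpow (by linarith : s ≠ 0)]; simp
    · rw [← Real.rpow_natCast, ← Real.rpow_add (lt_of_le_of_ne (norm_nonneg _) h0.symm)]
      congr 1; push_cast; ring
  · simp [Set.indicator_of_notMem hx]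

theorem tst_good {h : E0 → ℂ} (hm : Measurable h) {M : ℝ} (hM : ∀ x, ‖h x‖ ≤ M) {s : ℝ} (hs : 1 ≤ s)
    {A : Set E0} (hA : MeasurableSet A) (hAf : volume A < ∞) : Good (tst h s A) := by
  have m1 : Measurable (tst h s A) := by
    unfold tst
    refine Measurable.indicator ?_ hA
    exact ((Complex.continuous_conj.measurable).comp hm).mul
      (Complex.measurable_ofReal.comp (hm.norm.pow_const _))
  have b : ∀ x, ‖tst h s A x‖ ≤ A.indicator (fun _ => M ^ (s - 1)) x := by
    intro x
    refine (tst_norm_le A x).trans (Set.indicator_le_indicator ?_)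
    exact Real.rpow_le_rpow (norm_nonneg _) (hM x) (by linarith)
  refine ⟨m1, ?_, M ^ (s - 1), fun x => (b x).trans ?_⟩
  · refine Integrable.mono' (g := A.indicator (fun _ => M ^ (s - 1))) ?_ m1.aestronglyMeasurable
      (Filter.Eventually.of_forall b)
    rw [integrable_indicator_iff hA]
    exact integrableOn_const hAf.ne
  · refine Set.indicator_le_self' (fun _ _ => ?_) x
    exact Real.rpow_nonneg ((norm_nonneg _).trans (hM x)) _

theorem tst_int {h : E0 → ℂ} (hm : Measurable h) {s : ℝ} (hs : 1 ≤ s)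
    {A : Set E0} (hA : MeasurableSet A) (hfin : ∫⁻ x in A, ‖h x‖ₑ ^ s ≠ ∞) :
    ‖∫ x, h x * tst h s A x‖ₑ = ∫⁻ x in A, ‖h x‖ₑ ^ s := by
  simp_rw [tst_mul hs]
  rw [integral_complex_ofReal, integral_indicator hA, integral_eq_lintegral_of_nonneg_ae]
  · have : ∀ x, ENNReal.ofReal (‖h x‖ ^ s) = ‖h x‖ₑ ^ s := fun x => by
      rw [← ENNReal.ofReal_rpow_of_nonneg (norm_nonneg _) (by linarith), ofReal_norm]
    simp_rw [this]
    rw [← ofReal_norm, Complex.norm_of_nonneg ENNReal.toReal_nonneg, ENNReal.ofReal_toReal hfin]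
  · exact Filter.Eventually.of_forall fun x => by positivity
  · exact (hm.norm.pow_const _).aestronglyMeasurable

theorem tst_enorm_le {h : E0 → ℂ} {s : ℝ} (hs : 1 ≤ s) (A : Set E0) (x : E0) :
    ‖tst h s A x‖ₑ ≤ A.indicator (fun x => ‖h x‖ₑ ^ (s - 1)) x := by
  have := ENNReal.ofReal_le_ofReal (tst_norm_le (h := h) (s := s) A x)
  rw [ofReal_norm] at this
  refine this.trans (le_of_eq ?_)
  by_cases hx : x ∈ A
  · simp only [Set.indicator_of_mem hx]
    rw [← ENNReal.ofReal_rpow_of_nonneg (norm_nonneg _) (by linarith), ofReal_norm]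
  · simp [Set.indicator_of_notMem hx]

theorem lint_fin {h : E0 → ℂ} {M : ℝ} (hM : ∀ x, ‖h x‖ ≤ M) {s : ℝ} (hs : 1 ≤ s)
    {A : Set E0} (hAf : volume A < ∞) : ∫⁻ x in A, ‖h x‖ₑ ^ s ≠ ∞ := by
  refine ne_top_of_le_ne_top (b := ∫⁻ x in A, (ENNReal.ofReal M) ^ s) ?_ ?_
  · rw [setLIntegral_const]
    exact ENNReal.mul_ne_top (ENNReal.rpow_ne_top_of_nonneg (by linarith) ENNReal.ofReal_ne_top) hAf.ne
  · refine lintegral_mono fun x => ?_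
    refine ENNReal.rpow_le_rpow ?_ (by linarith)
    rw [← ofReal_norm]
    exact ENNReal.ofReal_le_ofReal (hM x)

theorem tst_lp {h : E0 → ℂ} {M : ℝ} (hM : ∀ x, ‖h x‖ ≤ M) {r : ℝ≥0∞}
    (hr : 1 ≤ r) (hrt : r ≠ ∞) {A : Set E0} (hA : MeasurableSet A) (hAf : volume A < ∞) :
    eLpNorm (tst h r.toReal A) (dualExp r) volume ≤
      (∫⁻ x in A, ‖h x‖ₑ ^ r.toReal) ^ (1 - 1 / r.toReal) := by
  have h1 := one_le_toReal' hr hrt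
  by_cases hr1 : r = 1
  · subst hr1
    have : dualExp 1 = ∞ := by simp [dualExp]
    rw [this]
    simp only [ENNReal.toReal_one, div_one, sub_self, ENNReal.rpow_zero]
    rw [eLpNorm_exponent_top]
    refine eLpNormEssSup_le_of_ae_enorm_bound (Filter.Eventually.of_forall fun x => ?_)
    refine (tst_enorm_le le_rfl A x).trans ?_
    by_cases hx : x ∈ A
    · simp [Set.indicator_of_mem hx]
    · simp [Set.indicator_of_notMem hx]
  · have hgt : 1 < r.toReal := by
      refine lt_of_le_of_ne h1 fun h => hr1 ?_
      rw [← ENNReal.toReal_eq_one_iff]; exact h.symm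
    have h0 : 0 < r.toReal - 1 := by linarith
    have hd : dualExp r = ENNReal.ofReal (r.toReal / (r.toReal - 1)) := by simp [dualExp, hr1, hrt]
    rw [hd]
    have hpos : 0 < r.toReal / (r.toReal - 1) := by positivity
    rw [eLpNorm_eq_lintegral_rpow_enorm_toReal (by simpa using hpos) (by simp), ENNReal.toReal_ofReal hpos.le]
    have e1 : 1 / (r.toReal / (r.toReal - 1)) = 1 - 1 / r.toReal := by
      field_simp
    rw [e1]
    refine ENNReal.rpow_le_rpow ?_ (by rw [← e1]; positivity)
    rw [← lintegral_indicator hA]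
    refine lintegral_mono fun x => ?_
    refine (ENNReal.rpow_le_rpow (tst_enorm_le h1 A x) hpos.le).trans ?_
    by_cases hx : x ∈ A
    · simp only [Set.indicator_of_mem hx]
      rw [← ENNReal.rpow_mul]
      apply le_of_eq; congr 1; field_simp
    · simp [Set.indicator_of_notMem hx, hpos]

theorem dual_bound {h : E0 → ℂ} (hm : Measurable h) {M : ℝ} (hM : ∀ x, ‖h x‖ ≤ M) {r : ℝ≥0∞}
    (hr : 1 ≤ r) (L : ℝ≥0∞)
    (H : ∀ g : E0 → ℂ, Good g → ‖∫ x, h x * g x‖ₑ ≤ L * eLpNorm g (dualExp r) volume) :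
    eLpNorm h r volume ≤ L := by
  by_cases hrt : r = ∞
  · subst hrt
    rw [eLpNorm_exponent_top]
    refine eLpNormEssSup_le_of_ae_enorm_bound ?_
    have := ae_le_of_forall_setLIntegral_le_of_sigmaFinite (μ := (volume : Measure E0))
      (f := fun x => ‖h x‖ₑ) (g := fun _ => L) hm.enorm ?_
    · exact this
    · intro A hA hAf
      have hf := lint_fin hM le_rfl hAf
      have h1 := H _ (tst_good hm hM le_rfl hA hAf)
      rw [tst_int hm le_rfl hA hf] at h1
      have hd : dualExp ∞ = 1 := by simp [dualExp]
      rw [hd, eLpNorm_one_eq_lintegral_enorm] at h1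
      simp only [ENNReal.rpow_one] at h1
      refine h1.trans ?_
      rw [setLIntegral_const]
      refine mul_le_mul_right ?_ _
      calc _ ≤ ∫⁻ x, A.indicator (fun x => ‖h x‖ₑ ^ ((1 : ℝ) - 1)) x := lintegral_mono fun x => tst_enorm_le le_rfl A x
        _ = volume A := by
          rw [lintegral_indicator hA]; simp
  · have h1 := one_le_toReal' hr hrt
    have hpos : 0 < r.toReal := by linarith
    have hr0 : r ≠ 0 := fun h => by simp [h] at hr
    rw [eLpNorm_eq_lintegral_rpow_enorm_toReal hr0 hrt]
    rw [one_div, ENNReal.rpow_inv_le_iff hpos]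
    have step : ∀ n : ℕ, ∫⁻ x in Metric.closedBall (0 : E0) n, ‖h x‖ₑ ^ r.toReal ≤ L ^ r.toReal := by
      intro n
      have hA : MeasurableSet (Metric.closedBall (0 : E0) n) := Metric.isClosed_closedBall.measurableSet
      have hAf : volume (Metric.closedBall (0 : E0) n) < ∞ := measure_closedBall_lt_top
      have hf := lint_fin hM h1 hAf
      have h2 := (H _ (tst_good hm hM h1 hA hAf)).trans (mul_le_mul_right (tst_lp hM hr hrt hA hAf) L)
      rw [tst_int hm h1 hA hf] at h2
      set J := ∫⁻ x in Metric.closedBall (0 : E0) n, ‖h x‖ₑ ^ r.toReal with hJ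
      rcases eq_or_ne J 0 with h0 | h0
      · rw [h0]; exact zero_le
      rw [← ENNReal.rpow_inv_le_iff hpos]
      have e : J = J ^ (r.toReal⁻¹) * J ^ (1 - 1 / r.toReal) := by
        rw [← ENNReal.rpow_add _ _ h0 hf]
        rw [show r.toReal⁻¹ + (1 - 1 / r.toReal) = 1 by ring, ENNReal.rpow_one]
      have c0 : J ^ (1 - 1 / r.toReal) ≠ 0 := by
        intro h; rw [ENNReal.rpow_eq_zero_iff] at h; rcases h with h | h
        · exact h0 h.1
        · exact hf h.1
      have c1 : J ^ (1 - 1 / r.toReal) ≠ ∞ := by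
        intro h; rw [ENNReal.rpow_eq_top_iff] at h; rcases h with h | h
        · exact h0 h.1
        · exact hf h.1
      rw [e] at h2
      exact (ENNReal.mul_le_mul_iff_left c0 c1).1 (by simpa only [← e] using h2)
    have hU : (⋃ n : ℕ, Metric.closedBall (0 : E0) n) = Set.univ := Metric.iUnion_closedBall_nat 0
    rw [← setLIntegral_univ, ← hU, setLIntegral_iUnion_of_directed]
    · exact iSup_le step
    · refine (monotone_nat_of_le_succ fun n => ?_ : Monotone fun n : ℕ => Metric.closedBall (0 : E0) n).directed_le
      exact Metric.closedBall_subset_closedBall (by push_cast; linarith)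

end Dual

section KNmeas
variable {d : ℕ}

open FourierTransform in
theorem KN_meas (a : 𝓢(EuclideanSpace ℝ (Fin d ⊕ Fin d), ℂ)) (f : 𝓢(EuclideanSpace ℝ (Fin d), ℂ)) :
    Measurable (KNop (a : EuclideanSpace ℝ (Fin d ⊕ Fin d) → ℂ) (f : EuclideanSpace ℝ (Fin d) → ℂ)) ∧
      ∃ M, ∀ x, ‖KNop (a : EuclideanSpace ℝ (Fin d ⊕ Fin d) → ℂ) (f : EuclideanSpace ℝ (Fin d) → ℂ) x‖ ≤ M := by
  have hF : Good (𝓕 (f : EuclideanSpace ℝ (Fin d) → ℂ)) := by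
    rw [← SchwartzMap.fourier_coe]; exact schwartz_good _
  have e : KNop (a : EuclideanSpace ℝ (Fin d ⊕ Fin d) → ℂ) (f : EuclideanSpace ℝ (Fin d) → ℂ) = fun x => ∫ ω, a (pairE x ω) * 𝓕 (f : EuclideanSpace ℝ (Fin d) → ℂ) ω * ch (inner ℝ x ω : ℝ) :=
    funext fun x => KN_eq _ _ x
  obtain ⟨M, hM⟩ := (schwartz_good a).2.2
  refine ⟨?_, M * ∫ ω, ‖𝓕 (f : EuclideanSpace ℝ (Fin d) → ℂ) ω‖, fun x => ?_⟩
  · rw [e]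
    refine StronglyMeasurable.measurable ?_
    have m : Measurable fun z : EuclideanSpace ℝ (Fin d) × EuclideanSpace ℝ (Fin d) =>
        a (pairE z.1 z.2) * 𝓕 (f : EuclideanSpace ℝ (Fin d) → ℂ) z.2 * ch (inner ℝ z.1 z.2 : ℝ) :=
      ((a.continuous.comp pairE_continuous).measurable.mul (hF.1.comp measurable_snd)).mul
        (ch_continuous.comp (continuous_fst.inner continuous_snd)).measurable
    exact m.stronglyMeasurable.integral_prod_right' (ν := volume)
  · rw [e, ← integral_const_mul]
    refine norm_integral_le_of_norm_le (hF.2.1.norm.const_mul M) (Filter.Eventually.of_forall fun ω => ?_)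
    rw [norm_mul, norm_mul, norm_ch, mul_one]
    exact mul_le_mul_of_nonneg_right (hM _) (norm_nonneg _)

theorem KN_zero (a : EuclideanSpace ℝ (Fin d ⊕ Fin d) → ℂ) (f : EuclideanSpace ℝ (Fin d) → ℂ)
    (hf : f =ᵐ[volume] 0) : KNop a f = 0 := by
  have h : ∀ ω, fTrans f ω = 0 := by
    intro ω
    unfold fTrans
    rw [integral_eq_zero_of_ae]
    filter_upwards [hf] with t ht
    simp [ht]
  ext x
  simp [KNop, h]

end KNmeas

/-- if `1/p ≥ |1/r − 1/2| + 1/q'` and `q ≤ min{r,r'}`, then symbols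
in `M^{p,q}` give operators bounded on `L^r`. -/
theorem kn_Mpq_bounded_on_Lr (d : ℕ) (p q r : ℝ≥0∞)
    (hp : 1 ≤ p) (hq : 1 ≤ q) (hr : 1 ≤ r)
    (h1 : |invR r - 1 / 2| + invR (dualExp q) ≤ invR p)
    (h2 : q ≤ min r (dualExp r)) :
    ∃ C : ℝ, 0 < C ∧
      ∀ (a : SchwartzMap (EuclideanSpace ℝ (Fin d ⊕ Fin d)) ℂ)
        (f : SchwartzMap (EuclideanSpace ℝ (Fin d)) ℂ),
        eLpNorm (KNop ⇑a ⇑f) r volume ≤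
          ENNReal.ofReal C * modNorm p q ⇑a * eLpNorm ⇑f r volume := by
  obtain ⟨K, hK, H⟩ := pairing_bound (d := d) p q r hp hq hr h1 h2
  refine ⟨K.toReal + 1, by positivity, fun a f => ?_⟩
  have hKle : K ≤ ENNReal.ofReal (K.toReal + 1) := by
    rw [ENNReal.le_ofReal_iff_toReal_le hK (by positivity)]
    linarith
  have hC0 : ENNReal.ofReal (K.toReal + 1) ≠ 0 := by
    simp only [ne_eq, ENNReal.ofReal_eq_zero, not_le]
    positivity
  by_cases hN : modNorm p q (⇑a) = ∞
  · by_cases hf : eLpNorm (⇑f) r volume = 0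
    · rw [eLpNorm_eq_zero_iff f.continuous.aestronglyMeasurable
        (fun h => by simp [h] at hr)] at hf
      rw [KN_zero _ _ hf]
      simp
    · rw [hN, ENNReal.mul_top hC0, ENNReal.top_mul hf]
      exact le_top
  · obtain ⟨hm, M, hM⟩ := KN_meas a f
    refine (dual_bound hm hM hr (K * modNorm p q (⇑a) * eLpNorm (⇑f) r volume)
      fun g hg => H a f g hg hN).trans ?_
    gcongr
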